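/- arXiv:2509.13264 — 5 statements merged into one kernel-verified Lean document; each statement's English description precedes it below -/
import Mathlib

section
/- Let p be an odd prime and let λ be a bar-partition with empty p-bar core. Then the set of parts of λ that are not divisible by p can be partitioned into pairs {a, b} with a + b ≡ 0 (mod p). In particular, for every 1 ≤ r ≤ p − 1, the number of parts of λ congruent to r modulo p equals the number of parts of λ congruent to p − r modulo p. -/
open scoped BigOperators

/-- A bar-partition: a finite set of distinct positive parts. -/
structure BarPartition where
  parts : Finset ℕ
  zero_not_mem : 0 ∉ parts

namespace BarPartition

/-- The size `|λ|` of a bar-partition: the sum of its parts. -/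
def size (l : BarPartition) : ℕ := ∑ a ∈ l.parts, a

/-- The length `ℓ(λ)` of a bar-partition: its number of parts. -/
def length (l : BarPartition) : ℕ := l.parts.card

/-- The sign `sgn(λ) = (-1)^(|λ| - ℓ(λ))` of a bar-partition. -/
def sgn (l : BarPartition) : ℤ := (-1) ^ (l.size - l.length)

/-- The empty bar-partition. -/
def empty : BarPartition := ⟨∅, by simp⟩

end BarPartition

/-- One `t`-bar removal step: replace a part `a > t` by `a - t` (if `a - t` is not already a
part), delete a part equal to `t`, or delete two parts whose sum is `t`. -/
def BarRemoval (t : ℕ) (μ ν : BarPartition) : Prop :=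
  (∃ a ∈ μ.parts, t < a ∧ a - t ∉ μ.parts ∧ ν.parts = insert (a - t) (μ.parts.erase a)) ∨
  (t ∈ μ.parts ∧ ν.parts = μ.parts.erase t) ∨
  (∃ a ∈ μ.parts, ∃ b ∈ μ.parts, a ≠ b ∧ a + b = t ∧ ν.parts = (μ.parts.erase a).erase b)

/-- A `t`-bar core: a bar-partition admitting no `t`-bar removal. -/
def IsBarCore (t : ℕ) (κ : BarPartition) : Prop := ∀ ν, ¬ BarRemoval t κ ν

/-- `κ` is the `t`-bar core of `λ`: it is obtained from `λ` by a (maximal) sequence of `t`-bar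
removals and admits no further removal. -/
def IsBarCoreOf (t : ℕ) (l κ : BarPartition) : Prop :=
  Relation.ReflTransGen (BarRemoval t) l κ ∧ IsBarCore t κ

/-- `λ` has empty `t`-bar core. -/
def HasEmptyBarCore (t : ℕ) (l : BarPartition) : Prop :=
  Relation.ReflTransGen (BarRemoval t) l BarPartition.empty

/-- The twisted runner at `r` (for `1 ≤ r ≤ (t-1)/2`) of the `t`-bar-abacus of `λ`, as a set
of integers: position `i ≥ 0` (above the fence) carries a bead iff `t*i + r` is a part of `λ`,
and position `i < 0` (slot `j = -(i+1)` below the fence) carries a bead iff `t*j + (t - r)` is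
*not* a part of `λ` (beads and empty slots of runner `t - r` are interchanged). -/
def twistedRunner (t r : ℕ) (l : BarPartition) : Set ℤ :=
  {i : ℤ | (0 ≤ i ∧ t * i.toNat + r ∈ l.parts) ∨
           (i < 0 ∧ t * (-(i + 1)).toNat + (t - r) ∉ l.parts)}

/-- Two bar-partitions have the same `t`-bar quotient: the runners `0` agree, and for each
`1 ≤ r ≤ (t-1)/2` the twisted runners differ by a shift (the shift by the unique balancing
integer produces the Frobenius symbol of the quotient component, so shift-equivalent twisted
runners are exactly those with equal quotient component). -/
def HasSameBarQuotient (t : ℕ) (l m : BarPartition) : Prop :=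
  (∀ k : ℕ, t * k ∈ l.parts ↔ t * k ∈ m.parts) ∧
  ∀ r : ℕ, 1 ≤ r → 2 * r < t →
    ∃ c : ℤ, twistedRunner t r m = (fun i => i + c) '' twistedRunner t r l

/-- `m` is the `t`-bar cocore of `l`: the unique bar-partition with empty `t`-bar core and the
same `t`-bar quotient as `l`. -/
def IsBarCocoreOf (t : ℕ) (l m : BarPartition) : Prop :=
  HasEmptyBarCore t m ∧ HasSameBarQuotient t l m

/-- A fixed algebraic closure of `ℚ`. -/
abbrev Qbar := AlgebraicClosure ℚ

/-- `σ` is a `σ_p`-type automorphism of `ℚ̄`: it raises every root of unity of order coprime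
to `p` to its `p`-th power, and fixes every root of unity of `p`-power order. -/
def IsSigmaPType (p : ℕ) (σ : Qbar ≃ₐ[ℚ] Qbar) : Prop :=
  (∀ (ζ : Qbar) (n : ℕ), 0 < n → Nat.Coprime n p → ζ ^ n = 1 → σ ζ = ζ ^ p) ∧
  (∀ (ζ : Qbar) (k : ℕ), ζ ^ (p ^ k) = 1 → σ ζ = ζ)

/-- The discriminant `D_λ` attached to a bar-partition `λ` of `n` with `k` parts:
`2·(−1)^((n−k+1)/2)·λ₁⋯λ_k` if `n − k` is odd, and `(−1)^((n−k)/2)·λ₁⋯λ_k` if `n − k` is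
even. -/
def barDisc (l : BarPartition) : ℤ :=
  if (l.size - l.length) % 2 = 1 then
    2 * (-1) ^ ((l.size - l.length + 1) / 2) * ∏ a ∈ l.parts, (a : ℤ)
  else
    (-1) ^ ((l.size - l.length) / 2) * ∏ a ∈ l.parts, (a : ℤ)

/-- The pairing property of a finite set of naturals. -/
def PairingOn (p : ℕ) (S : Finset ℕ) (f : ℕ → ℕ) : Prop :=
  ∀ a ∈ S, ¬ p ∣ a →
      f a ∈ S ∧ ¬ p ∣ f a ∧ f a ≠ a ∧ f (f a) = a ∧ p ∣ (a + f a)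

theorem pairing_step (p : ℕ) (μ ν : BarPartition) (h : BarRemoval p μ ν)
    (hν : ∃ f, PairingOn p ν.parts f) : ∃ f, PairingOn p μ.parts f := by
  obtain ⟨f, hf⟩ := hν
  rcases h with ⟨a, ha, hpa, hna, hE⟩ | ⟨hpm, hE⟩ | ⟨a, ha, b, hb, hab, hs, hE⟩
  · have hswap : ∀ x, Equiv.swap a (a - p) x ∈ ν.parts ↔ x ∈ μ.parts := by
      intro x
      rw [hE]
      by_cases h1 : x = a
      · subst h1; simp [ha]
      · by_cases h2 : x = a - p
        · subst h2
          have : a ≠ a - p := fun h => hna (h ▸ ha)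
          simp [hna, this]
        · rw [Equiv.swap_apply_of_ne_of_ne h1 h2]
          simp [h1, h2]
    have hmod : ∀ x, Equiv.swap a (a - p) x ≡ x [MOD p] := by
      intro x
      have hm : a - p ≡ a [MOD p] := by
        have h3 : a - p + p ≡ a - p [MOD p] := by simp [Nat.ModEq]
        rw [Nat.sub_add_cancel hpa.le] at h3
        exact h3.symm
      by_cases h1 : x = a
      · subst h1; simpa using hm
      · by_cases h2 : x = a - p
        · subst h2; simpa using hm.symm
        · rw [Equiv.swap_apply_of_ne_of_ne h1 h2]
    have hdvd : ∀ x, p ∣ Equiv.swap a (a - p) x ↔ p ∣ x :=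
      fun x => (hmod x).dvd_iff dvd_rfl
    refine ⟨fun x => Equiv.swap a (a - p) (f (Equiv.swap a (a - p) x)), ?_⟩
    intro x hx hpx
    obtain ⟨h1, h2, h3, h4, h5⟩ := hf _ ((hswap x).2 hx) (fun h => hpx ((hdvd x).1 h))
    refine ⟨?_, ?_, ?_, ?_, ?_⟩
    · rw [← hswap]; simpa using h1
    · rw [hdvd]; exact h2
    · intro h
      apply h3
      have := congrArg (Equiv.swap a (a - p)) h
      simpa using this
    · simp [h4]
    · exact (((hmod _).add_left x).dvd_iff dvd_rfl).2
        ((((hmod x).add_right _)).dvd_iff dvd_rfl |>.1 h5)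
  · refine ⟨f, ?_⟩
    intro x hx hpx
    have hxp : x ≠ p := fun h => hpx (h ▸ dvd_rfl)
    obtain ⟨h1, h2⟩ := hf x (by rw [hE]; simp [hxp, hx]) hpx
    rw [hE] at h1
    exact ⟨Finset.mem_of_mem_erase h1, h2⟩
  · have ha0 : 0 < a := Nat.pos_of_ne_zero fun h => μ.zero_not_mem (h ▸ ha)
    have hb0 : 0 < b := Nat.pos_of_ne_zero fun h => μ.zero_not_mem (h ▸ hb)
    have hda : ¬ p ∣ a := fun h => by have := Nat.le_of_dvd ha0 h; omega
    have hdb : ¬ p ∣ b := fun h => by have := Nat.le_of_dvd hb0 h; omega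
    refine ⟨fun x => if x = a then b else if x = b then a else f x, ?_⟩
    intro x hx hpx
    by_cases h1 : x = a
    · subst h1
      simp [hb, hdb, hab.symm, hs]
    · by_cases h2 : x = b
      · subst h2
        simp [ha, hda, hab, h1, Nat.add_comm x a, hs]
      · obtain ⟨h3, h4, h5, h6, h7⟩ := hf x (by rw [hE]; simp [h1, h2, hx]) hpx
        rw [hE] at h3
        simp only [Finset.mem_erase] at h3
        simp [h1, h2, h3, h4, h5, h6, h7]

theorem exists_pairing (p : ℕ) (l : BarPartition) (hl : HasEmptyBarCore p l) :
    ∃ f, PairingOn p l.parts f := by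
  unfold HasEmptyBarCore at hl
  induction hl using Relation.ReflTransGen.head_induction_on with
  | refl => exact ⟨id, fun a ha => by simp [BarPartition.empty] at ha⟩
  | head h _ ih => exact pairing_step p _ _ h ih

theorem pairing_mod (p r a b : ℕ) (hr : 1 ≤ r) (hrp : r ≤ p - 1) (ha : a % p = r)
    (h : p ∣ a + b) : b % p = p - r := by
  have hb : b % p < p := Nat.mod_lt _ (by omega)
  have h1 : p ∣ a % p + b % p := by
    rw [Nat.dvd_iff_mod_eq_zero, ← Nat.add_mod]
    exact Nat.mod_eq_zero_of_dvd h
  rw [ha] at h1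
  obtain ⟨k, hk⟩ := h1
  have : k = 1 := by
    have : k < 2 := by
      by_contra hc
      have := Nat.mul_le_mul_left p (Nat.le_of_not_lt hc)
      omega
    have : k ≠ 0 := by rintro rfl; omega
    omega
  subst this
  omega

/-- Let `p` be an odd prime and `λ` a bar-partition with empty `p`-bar core.
Then the parts of `λ` not divisible by `p` can be partitioned into pairs `{a, b}` with
`a + b ≡ 0 (mod p)` (witnessed by a fixed-point-free pairing involution); in particular, for
every `1 ≤ r ≤ p − 1` the number of parts congruent to `r` mod `p` equals the number of parts
congruent to `p − r` mod `p`. -/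
theorem barCocore_parts_pairing (p : ℕ) (hp : p.Prime) (hpodd : Odd p)
    (l : BarPartition) (hl : HasEmptyBarCore p l) :
    (∃ f : ℕ → ℕ, ∀ a ∈ l.parts, ¬ p ∣ a →
      f a ∈ l.parts ∧ ¬ p ∣ f a ∧ f a ≠ a ∧ f (f a) = a ∧ p ∣ (a + f a)) ∧
    ∀ r : ℕ, 1 ≤ r → r ≤ p - 1 →
      (l.parts.filter (fun a => a % p = r)).card =
        (l.parts.filter (fun a => a % p = p - r)).card := by
  obtain ⟨f, hf⟩ := exists_pairing p l hl
  refine ⟨⟨f, hf⟩, ?_⟩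
  intro r hr hrp
  have key : ∀ s, 1 ≤ s → s ≤ p - 1 → ∀ a ∈ l.parts.filter (fun a => a % p = s),
      f a ∈ l.parts.filter (fun a => a % p = p - s) ∧ f (f a) = a := by
    intro s hs hsp a ha
    rw [Finset.mem_filter] at ha
    have hd : ¬ p ∣ a := fun h => by
      have := Nat.mod_eq_zero_of_dvd h
      omega
    obtain ⟨h1, _, _, h4, h5⟩ := hf a ha.1 hd
    exact ⟨Finset.mem_filter.2 ⟨h1, pairing_mod p s a _ hs hsp ha.2 h5⟩, h4⟩
  have key2 := key (p - r) (by omega) (by omega)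
  rw [show p - (p - r) = r by omega] at key2
  exact Finset.card_nbij' f f (fun a ha => (key r hr hrp a ha).1) (fun a ha => (key2 a ha).1)
    (fun a ha => (key r hr hrp a ha).2) (fun a ha => (key2 a ha).2)
end

section
/- Let p be an odd prime, let λ be a bar-partition with p-bar core κ = λ_(p̄) and p-bar cocore μ = λ^[p̄], and let σ be a σ_p-type automorphism of ℚ̄. Let P(ν) denote the product of the parts of a bar-partition ν, and set d = (ℓ(κ) + ℓ(μ) − ℓ(λ))/2, which is a nonnegative integer. Then τ(P(λ),σ)·τ(P(κ),σ)·τ(P(μ),σ) = (−1)^(d·(p−1)/2). -/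
open scoped BigOperators

/-- The product `P(ν)` of the parts of a bar-partition. -/
def BarPartition.partsProd (l : BarPartition) : ℕ := ∏ a ∈ l.parts, a


theorem sigma_sqrt_two (p : ℕ) [Fact p.Prime] (hp2 : p ≠ 2)
    (σ : Qbar ≃ₐ[ℚ] Qbar) (hσ : IsSigmaPType p σ) (α : Qbar) (hα : α ^ 2 = 2) :
    σ α = (legendreSym p 2 : Qbar) * α := by
  obtain ⟨ζ, hζ⟩ := HasEnoughRootsOfUnity.exists_primitiveRoot Qbar 8
  have hp : p.Prime := Fact.out
  have hodd : Odd p := hp.odd_of_ne_two hp2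
  have h8 : ζ ^ 8 = 1 := hζ.pow_eq_one
  have h4 : ζ ^ 4 = -1 := by
    have h1 : ζ ^ 4 ≠ 1 := hζ.pow_ne_one_of_pos_of_lt (by norm_num) (by norm_num)
    have h2 : (ζ ^ 4 - 1) * (ζ ^ 4 + 1) = 0 := by linear_combination h8
    rcases mul_eq_zero.mp h2 with h | h
    · exact absurd (sub_eq_zero.mp h) h1
    · exact eq_neg_of_add_eq_zero_left h
  have hs : σ ζ = ζ ^ p := hσ.1 ζ 8 (by norm_num)
    (by
      have : Nat.Coprime (2 ^ 3) p := Nat.Coprime.pow_left 3 (Nat.coprime_two_left.mpr hodd)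
      simpa using this) h8
  have hg : (ζ - ζ ^ 3) ^ 2 = 2 := by linear_combination (ζ^2 - 2) * h4
  have hσg : σ (ζ - ζ ^ 3) = (legendreSym p 2 : Qbar) * (ζ - ζ ^ 3) := by
    rw [legendreSym.at_two hp2, ZMod.χ₈_nat_eq_if_mod_eight, map_sub, map_pow, hs]
    have hpm : ζ ^ p = ζ ^ (p % 8) := by
      conv_lhs => rw [← Nat.mod_add_div p 8, pow_add, pow_mul, h8, one_pow, mul_one]
    have h2 : p % 2 = 1 := Nat.odd_iff.mp hodd
    rw [hpm, h2]
    have : p % 8 = 1 ∨ p % 8 = 3 ∨ p % 8 = 5 ∨ p % 8 = 7 := by omega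
    rcases this with h | h | h | h <;> rw [h] <;> simp
    · linear_combination (ζ ^ 5 - ζ) * h4
    · linear_combination (-ζ^11 + ζ^7 - ζ^3 + ζ) * h4
    · linear_combination (-ζ^17 + ζ^13 - ζ^9 +ζ^5 + ζ^3 - ζ) * h4
  have h2 : (α - (ζ - ζ ^ 3)) * (α + (ζ - ζ ^ 3)) = 0 := by linear_combination hα - hg
  rcases mul_eq_zero.mp h2 with h | h
  · rw [sub_eq_zero.mp h, hσg]
  · rw [eq_neg_of_add_eq_zero_left h, map_neg, hσg]; ring

theorem sigma_sqrt_odd_prime (p q : ℕ) [Fact p.Prime] [Fact q.Prime] (hp2 : p ≠ 2) (hq2 : q ≠ 2)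
    (hpq : p ≠ q)
    (σ : Qbar ≃ₐ[ℚ] Qbar) (hσ : IsSigmaPType p σ) (α : Qbar) (hα : α ^ 2 = (q : Qbar)) :
    σ α = (legendreSym p q : Qbar) * α := by
  have hp : p.Prime := Fact.out
  have hq : q.Prime := Fact.out
  have hodd : Odd p := hp.odd_of_ne_two hp2
  have hqodd : Odd q := hq.odd_of_ne_two hq2
  have hcop : Nat.Coprime q p := (Nat.coprime_primes hq hp).mpr (Ne.symm hpq)
  obtain ⟨ζ, hζ⟩ := HasEnoughRootsOfUnity.exists_primitiveRoot Qbar q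
  obtain ⟨i, hi⟩ := IsAlgClosed.exists_pow_nat_eq (-1 : Qbar) (n := 2) (by norm_num)
  have hsi : σ i = (-1) ^ (p / 2) * i := by
    have h4 : i ^ 4 = 1 := by linear_combination (i ^ 2 - 1) * hi
    have : Nat.Coprime (2 ^ 2) p := Nat.Coprime.pow_left 2 (Nat.coprime_two_left.mpr hodd)
    rw [hσ.1 i 4 (by norm_num) (by simpa using this) h4, ← hi, ← pow_mul, ← pow_succ,
      Nat.two_mul_div_two_add_one_of_odd hodd]
  let χ : MulChar (ZMod q) Qbar := (quadraticChar (ZMod q)).ringHomComp (Int.castRingHom Qbar)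
  let ψ : AddChar (ZMod q) Qbar := AddChar.zmodChar q hζ.pow_eq_one
  have hψ : ψ.IsPrimitive := AddChar.zmodChar_primitive_of_primitive_root q hζ
  have hrc : ringChar (ZMod q) ≠ 2 := by rwa [ZMod.ringChar_zmod_n]
  have hχq : χ.IsQuadratic := (quadraticChar_isQuadratic (ZMod q)).comp _
  have hχ1 : χ ≠ 1 := by
    rw [Ne, MulChar.ringHomComp_eq_one_iff (RingHom.injective_int _)]
    exact quadraticChar_ne_one hrc
  have hsq := gaussSum_sq hχ1 hχq hψ
  have hm1 : χ (-1) = (-1) ^ (q / 2) := by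
    have := legendreSym.at_neg_one (p := q) hq2
    rw [ZMod.χ₄_eq_neg_one_pow (Nat.odd_iff.mp hqodd)] at this
    simp only [legendreSym, Int.cast_neg, Int.cast_one] at this
    simp [χ, MulChar.ringHomComp_apply, this]
  rw [hm1, ZMod.card] at hsq
  set g := gaussSum χ ψ with hg
  have hup : IsUnit (p : ZMod q) := (ZMod.isUnit_iff_coprime p q).mpr hcop.symm
  have hχp : χ p = (legendreSym q p : Qbar) := by
    simp [χ, MulChar.ringHomComp_apply, legendreSym]
  have hσg : σ g = (legendreSym q p : Qbar) * g := by
    have h1 : σ g = gaussSum χ (ψ.mulShift p) := by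
      rw [hg, gaussSum, gaussSum, map_sum]
      refine Finset.sum_congr rfl fun x _ => ?_
      rw [map_mul]
      congr 1
      · simp [χ, MulChar.ringHomComp_apply]
      · rw [AddChar.mulShift_apply, ← nsmul_eq_mul, AddChar.map_nsmul_eq_pow]
        apply hσ.1 _ q hq.pos hcop
        rw [← AddChar.map_nsmul_eq_pow]
        simp
    have h2 := gaussSum_mulShift χ ψ hup.unit
    rw [hup.unit_spec, ← h1, ← hg, hχp] at h2
    have h3 : (legendreSym q p : Qbar) ^ 2 = 1 := by
      have := legendreSym.sq_one (p := q) (a := p) (by simpa using hup.ne_zero)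
      exact_mod_cast this
    linear_combination (legendreSym q p : Qbar) * h2 - σ g * h3
  have hβ : (i ^ (q / 2) * α) ^ 2 = g ^ 2 := by
    rw [hsq, mul_pow, hα, ← pow_mul, mul_comm (q/2), pow_mul, hi]
  have hσβ : σ (i ^ (q / 2) * α) = (legendreSym q p : Qbar) * (i ^ (q / 2) * α) := by
    rcases sq_eq_sq_iff_eq_or_eq_neg.mp hβ with h | h
    · rw [h, hσg]
    · rw [h, map_neg, hσg]; ring
  have hrec := legendreSym.quadratic_reciprocity' (p := p) (q := q) hp2 hq2
  rw [map_mul, map_pow, hsi, mul_pow, ← pow_mul, hrec] at hσβ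
  push_cast at hσβ
  have hi0 : i ^ (q / 2) ≠ 0 := by
    apply pow_ne_zero
    rintro rfl
    norm_num at hi
  have hn0 : ((-1 : Qbar) ^ (p / 2 * (q / 2))) ≠ 0 := pow_ne_zero _ (by norm_num)
  apply mul_left_cancel₀ hi0
  apply mul_left_cancel₀ hn0
  linear_combination hσβ

theorem sigma_sqrt (p : ℕ) [Fact p.Prime] (hp2 : p ≠ 2)
    (σ : Qbar ≃ₐ[ℚ] Qbar) (hσ : IsSigmaPType p σ) (a : ℕ) :
    ¬ p ∣ a → ∀ α : Qbar, α ^ 2 = (a : Qbar) → σ α = (legendreSym p a : Qbar) * α := by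
  have hp : p.Prime := Fact.out
  induction a using induction_on_primes with
  | zero => intro h; simp at h
  | one =>
    intro _ α hα
    have : α ^ 2 = 1 := by simpa using hα
    rcases sq_eq_sq_iff_eq_or_eq_neg.mp (this.trans (one_pow 2).symm) with h | h <;> simp [h]
  | prime_mul q a hq ih =>
    intro h α hα
    have hq' : Fact q.Prime := ⟨hq⟩
    have hpq : p ≠ q := by rintro rfl; exact h (dvd_mul_right _ _)
    have hpa : ¬ p ∣ a := fun h' => h (h'.mul_left _)
    obtain ⟨β, hβ⟩ := IsAlgClosed.exists_pow_nat_eq (q : Qbar) (n := 2) (by norm_num)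
    obtain ⟨γ, hγ⟩ := IsAlgClosed.exists_pow_nat_eq (a : Qbar) (n := 2) (by norm_num)
    have h1 := ih hpa γ hγ
    have h2 : σ β = (legendreSym p q : Qbar) * β := by
      by_cases hq2 : q = 2
      · subst hq2
        exact_mod_cast sigma_sqrt_two p hp2 σ hσ β (by exact_mod_cast hβ)
      · exact sigma_sqrt_odd_prime p q hp2 hq2 hpq σ hσ β hβ
    have h3 : σ (β * γ) = (legendreSym p (q * a : ℕ) : Qbar) * (β * γ) := by
      push_cast
      rw [legendreSym.mul, map_mul, h1, h2]
      push_cast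
      ring
    have h4 : α ^ 2 = (β * γ) ^ 2 := by rw [hα, mul_pow, hβ, hγ]; push_cast; rfl
    rcases sq_eq_sq_iff_eq_or_eq_neg.mp h4 with h | h
    · rw [h, h3]
    · rw [h, map_neg, h3]; ring

/-- Number of elements of `S` congruent to `r` modulo `p`. -/
def resCount (p : ℕ) (S : Finset ℕ) (r : ℕ) : ℕ := (S.filter (fun a => a % p = r)).card

theorem sum_invariant_of_barRemoval {p : ℕ} (f : ℕ → ℤ) (hf : ∀ a, f (a + p) = f a)
    (hfp : f p = 0) (hfn : ∀ a b, 0 < a → 0 < b → a + b = p → f a + f b = 0)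
    {m n : BarPartition} (h : BarRemoval p m n) :
    ∑ a ∈ m.parts, f a = ∑ a ∈ n.parts, f a := by
  rcases h with ⟨a, ha, hpa, hn, e⟩ | ⟨ha, e⟩ | ⟨a, ha, b, hb, hab, hs, e⟩
  · rw [e, Finset.sum_insert (by simp [hn]), ← Finset.add_sum_erase _ _ ha]
    have := hf (a - p)
    rw [Nat.sub_add_cancel hpa.le] at this
    rw [this]
  · rw [e, ← Finset.add_sum_erase _ _ ha, hfp, zero_add]
  · have hb' : b ∈ m.parts.erase a := Finset.mem_erase.mpr ⟨hab.symm, hb⟩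
    rw [e, ← Finset.add_sum_erase _ _ ha, ← Finset.add_sum_erase _ _ hb', ← add_assoc,
      hfn a b ?_ ?_ hs, zero_add]
    · exact Nat.pos_of_ne_zero fun h => m.zero_not_mem (h ▸ ha)
    · exact Nat.pos_of_ne_zero fun h => m.zero_not_mem (h ▸ hb)

theorem resCount_sub_eq_sum (p r : ℕ) (S : Finset ℕ) :
    (resCount p S r : ℤ) - resCount p S (p - r) =
      ∑ a ∈ S, ((if a % p = r then (1 : ℤ) else 0) - if a % p = p - r then 1 else 0) := by
  rw [Finset.sum_sub_distrib]
  simp [resCount, Finset.sum_boole]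

theorem resCount_sub_invariant {p r : ℕ} (hr : 1 ≤ r) (hrp : 2 * r < p)
    {m n : BarPartition} (h : Relation.ReflTransGen (BarRemoval p) m n) :
    (resCount p m.parts r : ℤ) - resCount p m.parts (p - r) =
      (resCount p n.parts r : ℤ) - resCount p n.parts (p - r) := by
  simp only [resCount_sub_eq_sum]
  induction h with
  | refl => rfl
  | tail _ h2 ih =>
    rw [ih]
    apply sum_invariant_of_barRemoval _ _ _ _ h2
    · intro a; simp
    · simp only [Nat.mod_self]
      rw [if_neg (by omega), if_neg (by omega)]; simp
    · intro a b ha hb hab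
      rw [Nat.mod_eq_of_lt (by omega : a < p), Nat.mod_eq_of_lt (by omega : b < p)]
      by_cases h1 : a = r
      · rw [if_pos h1, if_neg (by omega), if_neg (by omega), if_pos (by omega)]; simp
      · by_cases h2 : a = p - r
        · rw [if_neg h1, if_pos h2, if_pos (by omega), if_neg (by omega)]; simp
        · rw [if_neg h1, if_neg h2, if_neg (by omega), if_neg (by omega)]; simp

theorem core_mod_mem {p : ℕ} {κ : BarPartition} (hκ : IsBarCore p κ) (hp : 0 < p) :
    ∀ a, a ∈ κ.parts → a % p ∈ κ.parts := by
  intro a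
  induction a using Nat.strong_induction_on with
  | _ a ih =>
    intro ha
    rcases lt_trichotomy a p with h | h | h
    · rwa [Nat.mod_eq_of_lt h]
    · exfalso
      subst h
      exact hκ ⟨κ.parts.erase a, fun h => κ.zero_not_mem (Finset.mem_of_mem_erase h)⟩
        (Or.inr (Or.inl ⟨ha, rfl⟩))
    · have hm : a - p ∈ κ.parts := by
        by_contra hn
        refine hκ ⟨insert (a - p) (κ.parts.erase a), ?_⟩ (Or.inl ⟨a, ha, h, hn, rfl⟩)
        intro h0
        rcases Finset.mem_insert.mp h0 with h0 | h0
        · omega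
        · exact κ.zero_not_mem (Finset.mem_of_mem_erase h0)
      have := ih (a - p) (by omega) hm
      rwa [← Nat.mod_eq_sub_mod h.le] at this

theorem core_no_mult {p : ℕ} {κ : BarPartition} (hκ : IsBarCore p κ) (hp : 0 < p) :
    ∀ a ∈ κ.parts, ¬ p ∣ a := by
  intro a ha h
  have := core_mod_mem hκ hp a ha
  rw [Nat.mod_eq_zero_of_dvd h] at this
  exact κ.zero_not_mem this

theorem core_resCount {p r : ℕ} {κ : BarPartition} (hκ : IsBarCore p κ) (hr : 1 ≤ r)
    (hrp : 2 * r < p) : resCount p κ.parts r = 0 ∨ resCount p κ.parts (p - r) = 0 := by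
  by_contra! h
  obtain ⟨a, ha⟩ := Finset.card_pos.mp (Nat.pos_of_ne_zero h.1)
  obtain ⟨b, hb⟩ := Finset.card_pos.mp (Nat.pos_of_ne_zero h.2)
  rw [Finset.mem_filter] at ha hb
  have ha' := core_mod_mem hκ (by omega) a ha.1
  have hb' := core_mod_mem hκ (by omega) b hb.1
  rw [ha.2] at ha'
  rw [hb.2] at hb'
  exact hκ ⟨(κ.parts.erase r).erase (p - r), fun h =>
      κ.zero_not_mem (Finset.mem_of_mem_erase (Finset.mem_of_mem_erase h))⟩
    (Or.inr (Or.inr ⟨r, ha', p - r, hb', by omega, by omega, rfl⟩))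

theorem resCount_le_of_shift {p r k : ℕ} {S T : Finset ℕ}
    (h : ∀ a ∈ S, a % p = r → a + p * k ∈ T) : resCount p S r ≤ resCount p T r := by
  refine Finset.card_le_card_of_injOn (fun a => a + p * k) ?_ ?_
  · intro a ha
    have ha := Finset.mem_filter.mp (Finset.mem_coe.mp ha)
    refine Finset.mem_coe.mpr (Finset.mem_filter.mpr ⟨h a ha.1 ha.2, ?_⟩)
    rw [Nat.add_mul_mod_self_left, ha.2]
  · intro a _ b _ hab
    exact Nat.add_right_cancel hab

theorem min_resCount_le {p r : ℕ} {l m : BarPartition} {c : ℤ}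
    (h : twistedRunner p r m = (fun i => i + c) '' twistedRunner p r l) :
    resCount p l.parts r ≤ resCount p m.parts r ∨
      resCount p l.parts (p - r) ≤ resCount p m.parts (p - r) := by
  have hmem : ∀ i : ℤ, i + c ∈ twistedRunner p r m ↔ i ∈ twistedRunner p r l := by
    intro i
    rw [h]
    constructor
    · rintro ⟨j, hj, hji⟩
      have : j = i := by simpa using hji
      exact this ▸ hj
    · intro hi
      exact ⟨i, hi, rfl⟩
  rcases le_total 0 c with hc | hc
  · left
    obtain ⟨k, rfl⟩ := Int.eq_ofNat_of_zero_le hc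
    refine resCount_le_of_shift (k := k) fun a ha har => ?_
    have hnn : (0 : ℤ) ≤ (a : ℤ) / (p : ℤ) := by positivity
    have h1 : ((a / p : ℕ) : ℤ) ∈ twistedRunner p r l := by
      left
      refine ⟨by positivity, ?_⟩
      rw [Int.toNat_natCast, ← har, Nat.div_add_mod]
      exact ha
    rw [← hmem] at h1
    rcases h1 with ⟨_, h2⟩ | ⟨h2, _⟩
    · have e : (((a / p : ℕ) : ℤ) + (k : ℤ)).toNat = a / p + k := by omega
      rw [e] at h2
      have e2 : a + p * k = p * (a / p + k) + r := by
        rw [← har]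
        have := Nat.div_add_mod a p
        rw [mul_add]; omega
      rwa [e2]
    · omega
  · right
    obtain ⟨k, hk⟩ := Int.eq_ofNat_of_zero_le (neg_nonneg.mpr hc)
    obtain rfl : c = -(k : ℤ) := by omega
    refine resCount_le_of_shift (k := k) fun a ha har => ?_
    have hnn : (0 : ℤ) ≤ (a : ℤ) / (p : ℤ) := by positivity
    by_contra hn
    have e2 : p * (a / p + k) + (p - r) = a + p * k := by
      rw [← har]
      have := Nat.div_add_mod a p
      rw [mul_add]; omega
    have h1 : -((a / p : ℕ) : ℤ) - 1 + -(k : ℤ) ∈ twistedRunner p r m := by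
      right
      refine ⟨by omega, ?_⟩
      have e : (-(-((a / p : ℕ) : ℤ) - 1 + -(k : ℤ) + 1)).toNat = a / p + k := by omega
      rw [e, e2]
      exact hn
    rw [hmem] at h1
    rcases h1 with ⟨h2, _⟩ | ⟨_, h2⟩
    · omega
    · have e : (-(-((a / p : ℕ) : ℤ) - 1 + 1)).toNat = a / p := by omega
      rw [e, ← har, Nat.div_add_mod] at h2
      exact h2 ha

theorem prod_split {M : Type*} [CommMonoid M] {p : ℕ} (hodd : Odd p) (S : Finset ℕ) (f : ℕ → M) :
    ∏ a ∈ S, f a = (∏ a ∈ S.filter (fun a => p ∣ a), f a) *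
      ∏ r ∈ Finset.Icc 1 ((p - 1) / 2),
        ((∏ a ∈ S.filter (fun a => a % p = r), f a) *
          ∏ a ∈ S.filter (fun a => a % p = p - r), f a) := by
  have hp : 0 < p := hodd.pos
  have hp2 : p % 2 = 1 := Nat.odd_iff.mp hodd
  rw [← Finset.prod_filter_mul_prod_filter_not S (fun a => p ∣ a)]
  congr 1
  have hmaps : ∀ a ∈ S.filter (fun a => ¬ p ∣ a),
      min (a % p) (p - a % p) ∈ Finset.Icc 1 ((p - 1) / 2) := by
    intro a ha
    have h1 := (Finset.mem_filter.mp ha).2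
    rw [Nat.dvd_iff_mod_eq_zero] at h1
    have h2 := Nat.mod_lt a hp
    rw [Finset.mem_Icc]
    omega
  rw [← Finset.prod_fiberwise_of_maps_to hmaps]
  refine Finset.prod_congr rfl fun r hr => ?_
  rw [Finset.mem_Icc] at hr
  rw [← Finset.prod_union]
  · refine Finset.prod_congr ?_ fun _ _ => rfl
    ext a
    have h2 := Nat.mod_lt a hp
    simp only [Finset.mem_filter, Finset.mem_union, Nat.dvd_iff_mod_eq_zero]
    by_cases ha : a ∈ S
    · simp only [ha, true_and]
      omega
    · simp [ha]
  · rw [Finset.disjoint_left]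
    intro a h1 h2
    have h1 := (Finset.mem_filter.mp h1).2
    have h2 := (Finset.mem_filter.mp h2).2
    omega

theorem card_split {p : ℕ} (hodd : Odd p) (S : Finset ℕ) :
    S.card = (S.filter (fun a => p ∣ a)).card +
      ∑ r ∈ Finset.Icc 1 ((p - 1) / 2), (resCount p S r + resCount p S (p - r)) := by
  have := prod_split (M := Multiplicative ℕ) hodd S (fun _ => Multiplicative.ofAdd 1)
  have := congrArg Multiplicative.toAdd this
  simpa [toAdd_prod, resCount] using this

theorem sign_split {p : ℕ} [Fact p.Prime] (hp2 : p ≠ 2) (hodd : Odd p) (S : Finset ℕ) (s : ℕ → ℤ)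
    (hs : ∀ a, ¬ p ∣ a → s a = legendreSym p a) :
    ∏ a ∈ S, s a = (∏ a ∈ S.filter (fun a => p ∣ a), s a) *
      ∏ r ∈ Finset.Icc 1 ((p - 1) / 2),
        (legendreSym p r ^ resCount p S r *
          (legendreSym p r * (-1) ^ ((p - 1) / 2)) ^ resCount p S (p - r)) := by
  have hp2' : p % 2 = 1 := Nat.odd_iff.mp hodd
  rw [prod_split hodd]
  congr 1
  refine Finset.prod_congr rfl fun r hr => ?_
  rw [Finset.mem_Icc] at hr
  congr 1
  · apply Finset.prod_eq_pow_card
    intro a ha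
    have ha := (Finset.mem_filter.mp ha).2
    rw [hs a (by rw [Nat.dvd_iff_mod_eq_zero]; omega), legendreSym.mod, ← ha]
    norm_cast
  · apply Finset.prod_eq_pow_card
    intro a ha
    have ha := (Finset.mem_filter.mp ha).2
    have e : (p - 1) / 2 = p / 2 := by omega
    rw [hs a (by rw [Nat.dvd_iff_mod_eq_zero]; omega), e, ← ZMod.χ₄_eq_neg_one_pow hp2', mul_comm,
      ← legendreSym.at_neg hp2, legendreSym.mod, legendreSym.mod p (-r)]
    congr 1
    have h1 : ((a : ℤ) % p) = p - r := by
      have : ((a % p : ℕ) : ℤ) = ((p - r : ℕ) : ℤ) := by rw [ha]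
      push_cast [Nat.cast_sub (by omega : r ≤ p)] at this
      exact this
    rw [h1, ← Int.add_mul_emod_self_left (-(r : ℤ)) p 1, Int.emod_eq_of_lt] <;> [ring; omega; omega]

theorem term_eq {x ε : ℤ} (hx : x ^ 2 = 1) (hε : ε ^ 2 = 1) {a b a' b' m : ℕ}
    (h : (a : ℤ) - b = a' - b') (h0 : a' = 0 ∨ b' = 0) (hm : min a b ≤ m) :
    (x ^ a * (x * ε) ^ b) * (x ^ a' * (x * ε) ^ b') * (x ^ m * (x * ε) ^ m) =
      ε ^ (m - min a b) := by
  obtain ⟨d, rfl⟩ := Nat.exists_eq_add_of_le hm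
  rw [Nat.add_sub_cancel_left]
  rcases le_total b a with hab | hab
  · obtain ⟨e, rfl⟩ := Nat.exists_eq_add_of_le hab
    rw [min_eq_right hab]
    obtain rfl : b' = 0 := by omega
    obtain rfl : a' = e := by omega
    calc _ = (x ^ 2) ^ (2 * b + a' + d) * (ε ^ 2) ^ b * ε ^ d := by ring
      _ = _ := by rw [hx, hε]; simp
  · obtain ⟨e, rfl⟩ := Nat.exists_eq_add_of_le hab
    rw [min_eq_left hab]
    obtain rfl : a' = 0 := by omega
    obtain rfl : b' = e := by omega
    calc _ = (x ^ 2) ^ (2 * a + b' + d) * (ε ^ 2) ^ (a + b') * ε ^ d := by ring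
      _ = _ := by rw [hx, hε]; simp

theorem tau_eq_prod (σ : Qbar ≃ₐ[ℚ] Qbar) (s : ℕ → ℤ) (rt : ℕ → Qbar)
    (hrt : ∀ a, rt a ^ 2 = (a : Qbar)) (hs : ∀ a, σ (rt a) = (s a : Qbar) * rt a)
    (l : BarPartition) (τ : ℤ)
    (hτ : ∀ α : Qbar, α ^ 2 = (l.partsProd : Qbar) → σ α = (τ : Qbar) * α) :
    τ = ∏ a ∈ l.parts, s a := by
  have h1 := hτ (∏ a ∈ l.parts, rt a) (by
    rw [← Finset.prod_pow, BarPartition.partsProd]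
    push_cast
    exact Finset.prod_congr rfl fun a _ => hrt a)
  rw [map_prod, Finset.prod_congr rfl (fun a _ => hs a), Finset.prod_mul_distrib] at h1
  have h0 : ∏ a ∈ l.parts, rt a ≠ 0 := by
    rw [Finset.prod_ne_zero_iff]
    intro a ha h
    have := hrt a
    rw [h] at this
    have : (a : Qbar) = 0 := by simpa using this.symm
    have : a = 0 := by exact_mod_cast this
    exact l.zero_not_mem (this ▸ ha)
  have h2 := mul_right_cancel₀ h0 h1
  exact_mod_cast h2.symm

/-- Let `p` be an odd prime, `λ` a bar-partition with `p`-bar core `κ` and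
`p`-bar cocore `μ`, and `σ` a `σ_p`-type automorphism of `ℚ̄`. Then
`d = (ℓ(κ) + ℓ(μ) − ℓ(λ))/2` is a nonnegative integer and
`τ(P(λ),σ)·τ(P(κ),σ)·τ(P(μ),σ) = (−1)^(d·(p−1)/2)`. -/
theorem tau_partsProd_mul_eq_neg_one_pow (p : ℕ) (hp : p.Prime) (hpodd : Odd p)
    (l κ μ : BarPartition) (hκ : IsBarCoreOf p l κ) (hμ : IsBarCocoreOf p l μ)
    (σ : Qbar ≃ₐ[ℚ] Qbar) (hσ : IsSigmaPType p σ)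
    (τl τκ τμ : ℤ)
    (hτl : ∀ α : Qbar, α ^ 2 = (l.partsProd : Qbar) → σ α = (τl : Qbar) * α)
    (hτκ : ∀ α : Qbar, α ^ 2 = (κ.partsProd : Qbar) → σ α = (τκ : Qbar) * α)
    (hτμ : ∀ α : Qbar, α ^ 2 = (μ.partsProd : Qbar) → σ α = (τμ : Qbar) * α) :
    ∃ d : ℕ, 2 * (d : ℤ) = (κ.length : ℤ) + μ.length - l.length ∧
      τl * τκ * τμ = (-1) ^ (d * ((p - 1) / 2)) := by
  have hfact : Fact p.Prime := ⟨hp⟩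
  have hp2' : p % 2 = 1 := Nat.odd_iff.mp hpodd
  have hp2 : p ≠ 2 := by rintro rfl; omega
  have hp0 : 0 < p := hp.pos
  have hex : ∀ a : ℕ, ∃ (s : ℤ) (α : Qbar), α ^ 2 = (a : Qbar) ∧ σ α = (s : Qbar) * α ∧
      s ^ 2 = 1 := by
    intro a
    obtain ⟨α, hα⟩ := IsAlgClosed.exists_pow_nat_eq (a : Qbar) (n := 2) (by norm_num)
    have h : σ α ^ 2 = α ^ 2 := by rw [← map_pow, hα, map_natCast]
    rcases sq_eq_sq_iff_eq_or_eq_neg.mp h with h | h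
    · exact ⟨1, α, hα, by simp [h], by norm_num⟩
    · exact ⟨-1, α, hα, by simp [h], by norm_num⟩
  choose s rt hrt hsrt hs2 using hex
  have hsL : ∀ a, ¬ p ∣ a → s a = legendreSym p a := by
    intro a ha
    have h1 := sigma_sqrt p hp2 σ hσ a ha (rt a) (hrt a)
    rw [hsrt] at h1
    have h0 : rt a ≠ 0 := by
      intro h
      have h3 := hrt a
      rw [h] at h3
      have h4 : (a : Qbar) = 0 := by simpa using h3.symm
      have h5 : a = 0 := by exact_mod_cast h4
      exact ha (h5 ▸ dvd_zero p)
    exact_mod_cast mul_right_cancel₀ h0 h1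
  have hmulκ : κ.parts.filter (fun a => p ∣ a) = ∅ :=
    Finset.filter_eq_empty_iff.mpr fun a ha => core_no_mult hκ.2 hp0 a ha
  have hmulμ : μ.parts.filter (fun a => p ∣ a) = l.parts.filter (fun a => p ∣ a) := by
    ext a
    simp only [Finset.mem_filter]
    constructor
    · rintro ⟨h1, k, rfl⟩
      exact ⟨(hμ.2.1 k).mpr h1, dvd_mul_right _ _⟩
    · rintro ⟨h1, k, rfl⟩
      exact ⟨(hμ.2.1 k).mp h1, dvd_mul_right _ _⟩
  have key : ∀ r ∈ Finset.Icc 1 ((p - 1) / 2),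
      (resCount p l.parts r : ℤ) - resCount p l.parts (p - r) =
        resCount p κ.parts r - resCount p κ.parts (p - r) ∧
      (resCount p κ.parts r = 0 ∨ resCount p κ.parts (p - r) = 0) ∧
      resCount p μ.parts (p - r) = resCount p μ.parts r ∧
      min (resCount p l.parts r) (resCount p l.parts (p - r)) ≤ resCount p μ.parts r := by
    intro r hr
    rw [Finset.mem_Icc] at hr
    have hr1 : 1 ≤ r := hr.1
    have hr2 : 2 * r < p := by omega
    have h3 : resCount p μ.parts (p - r) = resCount p μ.parts r := by
      have := resCount_sub_invariant hr1 hr2 hμ.1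
      simp only [BarPartition.empty, resCount, Finset.filter_empty, Finset.card_empty] at this
      simp only [resCount]
      omega
    refine ⟨resCount_sub_invariant hr1 hr2 hκ.1, core_resCount hκ.2 hr1 hr2, h3, ?_⟩
    obtain ⟨c, hc⟩ := hμ.2.2 r hr1 hr2
    have := min_resCount_le hc
    omega
  refine ⟨∑ r ∈ Finset.Icc 1 ((p - 1) / 2), (resCount p μ.parts r -
    min (resCount p l.parts r) (resCount p l.parts (p - r))), ?_, ?_⟩
  · simp only [BarPartition.length]
    rw [card_split hpodd l.parts, card_split hpodd κ.parts, card_split hpodd μ.parts, hmulκ, hmulμ]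
    have hsum : ∑ r ∈ Finset.Icc 1 ((p - 1) / 2), (2 * (resCount p μ.parts r -
          min (resCount p l.parts r) (resCount p l.parts (p - r))) +
          (resCount p l.parts r + resCount p l.parts (p - r))) =
        ∑ r ∈ Finset.Icc 1 ((p - 1) / 2),
          ((resCount p κ.parts r + resCount p κ.parts (p - r)) +
            (resCount p μ.parts r + resCount p μ.parts (p - r))) := by
      refine Finset.sum_congr rfl fun r hr => ?_
      have := key r hr
      omega
    rw [Finset.card_empty]
    simp only [Finset.sum_add_distrib, ← Finset.mul_sum] at hsum ⊢
    omega
  · rw [tau_eq_prod σ s rt hrt hsrt l τl hτl, tau_eq_prod σ s rt hrt hsrt κ τκ hτκ,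
      tau_eq_prod σ s rt hrt hsrt μ τμ hτμ, sign_split hp2 hpodd l.parts s hsL,
      sign_split hp2 hpodd κ.parts s hsL, sign_split hp2 hpodd μ.parts s hsL, hmulκ, hmulμ,
      Finset.prod_empty, one_mul]
    have hM : (∏ a ∈ l.parts.filter (fun a => p ∣ a), s a) ^ 2 = 1 := by
      rw [← Finset.prod_pow]
      exact Finset.prod_eq_one fun a _ => hs2 a
    have hε : ((-1 : ℤ) ^ ((p - 1) / 2)) ^ 2 = 1 := by
      rw [← pow_mul, mul_comm, pow_mul]; norm_num
    have hprod : (∏ r ∈ Finset.Icc 1 ((p - 1) / 2), (legendreSym p r ^ resCount p l.parts r *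
          (legendreSym p r * (-1) ^ ((p - 1) / 2)) ^ resCount p l.parts (p - r))) *
        (∏ r ∈ Finset.Icc 1 ((p - 1) / 2), (legendreSym p r ^ resCount p κ.parts r *
          (legendreSym p r * (-1) ^ ((p - 1) / 2)) ^ resCount p κ.parts (p - r))) *
        (∏ r ∈ Finset.Icc 1 ((p - 1) / 2), (legendreSym p r ^ resCount p μ.parts r *
          (legendreSym p r * (-1) ^ ((p - 1) / 2)) ^ resCount p μ.parts (p - r))) =
        (-1) ^ ((∑ r ∈ Finset.Icc 1 ((p - 1) / 2), (resCount p μ.parts r -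
          min (resCount p l.parts r) (resCount p l.parts (p - r)))) * ((p - 1) / 2)) := by
      rw [mul_comm (Finset.sum _ _), pow_mul, ← Finset.prod_pow_eq_pow_sum,
        ← Finset.prod_mul_distrib, ← Finset.prod_mul_distrib]
      refine Finset.prod_congr rfl fun r hr => ?_
      obtain ⟨h1, h2, h3, h4⟩ := key r hr
      rw [h3]
      refine term_eq ?_ hε h1 h2 h4
      apply legendreSym.sq_one
      rw [Finset.mem_Icc] at hr
      intro h
      have h5 : ((r : ℕ) : ZMod p) = 0 := by exact_mod_cast h
      rw [ZMod.natCast_eq_zero_iff] at h5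
      have := Nat.le_of_dvd (by omega) h5
      omega
    rw [← hprod]
    generalize (∏ a ∈ l.parts.filter (fun a => p ∣ a), s a) = M at hM ⊢
    generalize (∏ r ∈ Finset.Icc 1 ((p - 1) / 2), (legendreSym p r ^ resCount p l.parts r *
          (legendreSym p r * (-1) ^ ((p - 1) / 2)) ^ resCount p l.parts (p - r))) = A
    generalize (∏ r ∈ Finset.Icc 1 ((p - 1) / 2), (legendreSym p r ^ resCount p κ.parts r *
          (legendreSym p r * (-1) ^ ((p - 1) / 2)) ^ resCount p κ.parts (p - r))) = B
    generalize (∏ r ∈ Finset.Icc 1 ((p - 1) / 2), (legendreSym p r ^ resCount p μ.parts r *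
          (legendreSym p r * (-1) ^ ((p - 1) / 2)) ^ resCount p μ.parts (p - r))) = C
    linear_combination (A * B * C) * hM
end

section
/- Let p be an odd prime and let λ be a bar-partition of n whose p-bar core has size r < p and whose p-bar weight is w (so n = r + pw). Then ν_p(n!) − ν_p(H(λ)) = ν_p((pw)!) − ν_p(H(λ^[p̄])), where H(ν) denotes the product of all bar lengths of a bar-partition ν, λ^[p̄] is the p-bar cocore of λ, and ν_p is the p-adic valuation. -/
open scoped BigOperators

/-- The product `H(ν)` of all bar lengths of a bar-partition `ν`: for each part `a`, the bars
of the row of `a` have lengths `a + b` for the parts `b < a`, together with the elements of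
`{1, …, a}` that are not of the form `a − b` for a part `b < a`. -/
def barLengthsProd (l : BarPartition) : ℕ :=
  ∏ a ∈ l.parts,
    ((∏ b ∈ l.parts.filter (· < a), (a + b)) *
      ∏ m ∈ (Finset.Icc 1 a).filter (fun m => ∀ b ∈ l.parts, b < a → m ≠ a - b), m)

/-- The doubled bead set of a bar-partition. -/
def dbl (l : BarPartition) (x : ℤ) : Prop :=
  (0 < x ∧ x.toNat ∈ l.parts) ∨ (x < 0 ∧ (-x).toNat ∉ l.parts)

theorem dbl_neg (l : BarPartition) (x : ℤ) (hx : x ≠ 0) : dbl l (-x) ↔ ¬ dbl l x := by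
  unfold dbl
  rcases lt_or_gt_of_ne hx with h | h
  · have h1 : ¬ (0 < x) := by omega
    have h2 : 0 < -x := by omega
    have h3 : ¬ (-x < 0) := by omega
    simp only [h, h1, h2, h3, true_and, false_and, or_false, false_or, not_not]
  · have h1 : ¬ (x < 0) := by omega
    have h2 : ¬ 0 < -x := by omega
    have h3 : -x < 0 := by omega
    simp only [h, h1, h2, h3, true_and, false_and, or_false, false_or, neg_neg]

theorem dbl_twisted (p r : ℕ) (l : BarPartition) (hr : 1 ≤ r) (hrp : 2 * r < p) (i : ℤ) :
    i ∈ twistedRunner p r l ↔ dbl l (p * i + r) := by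
  unfold twistedRunner dbl
  simp only [Set.mem_ofPred_eq]
  rcases le_or_gt 0 i with h | h
  · obtain ⟨k, rfl⟩ := Int.eq_ofNat_of_zero_le h
    have e : ((p : ℤ) * (k : ℤ) + r).toNat = p * k + r := by
      have : ((p : ℤ) * (k : ℤ) + r) = ((p * k + r : ℕ) : ℤ) := by push_cast; ring
      rw [this, Int.toNat_natCast]
    have h0 : (0 : ℤ) ≤ p * k := by positivity
    rw [e]
    have h1 : 0 < (p : ℤ) * (k : ℤ) + r := by omega
    have h2 : ¬ ((p : ℤ) * (k : ℤ) + r < 0) := by omega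
    have h3 : ¬ ((k : ℤ) < 0) := by omega
    simp only [h1, h2, h3, h, true_and, false_and, or_false, Int.toNat_natCast]
  · obtain ⟨k, hk⟩ := Int.eq_ofNat_of_zero_le (show 0 ≤ -(i + 1) by omega)
    obtain rfl : i = -(k : ℤ) - 1 := by omega
    have h0 : (0 : ℤ) ≤ p * k := by positivity
    have e0 : (p : ℤ) * (-(k : ℤ) - 1) + r = -((p * k + (p - r) : ℕ) : ℤ) := by
      push_cast [Nat.cast_sub (show r ≤ p by omega)]; ring
    have e1 : (-(-(k : ℤ) - 1 + 1)).toNat = k := by omega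
    rw [e0, e1]
    have h4 : 0 < p * k + (p - r) := by omega
    have h1 : ¬ (0 < -((p * k + (p - r) : ℕ) : ℤ)) := by omega
    have h2 : -((p * k + (p - r) : ℕ) : ℤ) < 0 := by omega
    have h3 : ¬ (0 ≤ -(k : ℤ) - 1) := by omega
    simp only [h1, h2, h3, h, true_and, false_and, false_or, neg_neg, Int.toNat_natCast]

theorem dbl_zero (p : ℕ) (hp : 0 < p) (l m : BarPartition)
    (h : ∀ k : ℕ, p * k ∈ l.parts ↔ p * k ∈ m.parts) (i : ℤ) :
    dbl m (p * i) ↔ dbl l (p * i) := by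
  have key : ∀ k : ℕ, dbl m (p * (k : ℤ)) ↔ dbl l (p * (k : ℤ)) := by
    intro k
    unfold dbl
    have e : (p : ℤ) * k = ((p * k : ℕ) : ℤ) := by push_cast; ring
    rw [e]
    have h1 : ¬ (((p * k : ℕ) : ℤ) < 0) := by omega
    simp only [h1, false_and, or_false, Int.toNat_natCast, h]
  rcases le_or_gt 0 i with hi | hi
  · obtain ⟨k, rfl⟩ := Int.eq_ofNat_of_zero_le hi
    exact key k
  · obtain ⟨k, hk⟩ := Int.eq_ofNat_of_zero_le (show 0 ≤ -i by omega)
    obtain rfl : i = -(k : ℤ) := by omega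
    have hk0 : (p : ℤ) * k ≠ 0 := by
      have : (0 : ℤ) < k := by omega
      positivity
    rw [mul_neg, dbl_neg _ _ hk0, dbl_neg _ _ hk0, key k]

theorem exists_shift (p : ℕ) (hp : 0 < p) (hpodd : Odd p) (l m : BarPartition)
    (h : HasSameBarQuotient p l m) :
    ∃ C : ℤ → ℤ, ∀ x : ℤ, dbl m (x + p * C (x % p)) ↔ dbl l x := by
  classical
  obtain ⟨h0, h1⟩ := h
  choose! c hc using h1
  have key : ∀ r : ℕ, 1 ≤ r → 2 * r < p → ∀ i : ℤ,
      dbl m (p * (i + c r) + r) ↔ dbl l (p * i + r) := by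
    intro r hr hrp i
    rw [← dbl_twisted p r m hr hrp, ← dbl_twisted p r l hr hrp, hc r hr hrp]
    simp
  refine ⟨fun ρ => if ρ = 0 then 0 else if 2 * ρ < p then c ρ.toNat else - c (p - ρ).toNat, ?_⟩
  intro x
  have hp' : (0 : ℤ) < p := by exact_mod_cast hp
  have hx0 := Int.emod_nonneg x hp'.ne'
  have hx1 := Int.emod_lt_of_pos x hp'
  have hx2 := Int.mul_ediv_add_emod x p
  set ρ := x % (p : ℤ) with hρ
  set i := x / (p : ℤ) with hi
  obtain ⟨s, hs⟩ := Int.eq_ofNat_of_zero_le hx0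
  rw [hs] at hx1 hx2 ⊢
  by_cases hs0 : s = 0
  · subst hs0
    simp only [Nat.cast_zero, add_zero] at hx2
    rw [← hx2]
    simpa using dbl_zero p hp l m h0 i
  have hs0' : ¬ ((s : ℤ) = 0) := by exact_mod_cast hs0
  by_cases hs1 : 2 * (s : ℤ) < p
  · simp only [hs0', hs1, if_true, if_false, Int.toNat_natCast]
    have := key s (by omega) (by omega) i
    rw [hx2] at this
    rw [← this, ← hx2]
    ring_nf
  · simp only [hs0', hs1, if_false]
    obtain ⟨q, hq⟩ := hpodd
    have e : ((p : ℤ) - s).toNat = p - s := by omega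
    rw [e]
    have hh := key (p - s) (by omega) (by omega) (-i - 1)
    have e1 : (p : ℤ) * (-i - 1) + ((p - s : ℕ) : ℤ) = - x := by
      rw [← hx2]; push_cast [Nat.cast_sub (show s ≤ p by omega)]; ring
    have e2 : (p : ℤ) * (-i - 1 + c (p - s)) + ((p - s : ℕ) : ℤ)
        = - (x + p * -c (p - s)) := by
      rw [← hx2]; push_cast [Nat.cast_sub (show s ≤ p by omega)]; ring
    have n1 : x % (p : ℤ) ≠ 0 := by rw [← hρ, hs]; exact hs0'
    have nx : x ≠ 0 := by rintro rfl; simp at n1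
    have ny : x + p * -c (p - s) ≠ 0 := by
      intro h; apply n1
      have : x = p * c (p - s) := by linarith
      rw [this]; simp
    rw [e1, e2, dbl_neg _ _ nx, dbl_neg _ _ ny] at hh
    exact not_iff_not.mp hh

open Classical in
/-- Valuation of a hook of the doubled bead set. -/
noncomputable def hookVal (p : ℕ) (l : BarPartition) (q : ℤ × ℤ) : ℕ :=
  if dbl l q.1 ∧ ¬ dbl l q.2 then padicValNat p (q.1 - q.2).toNat else 0

/-- Shift of the integers within residue classes. -/
def shiftEquiv (p : ℕ) (C : ℤ → ℤ) : ℤ ≃ ℤ where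
  toFun x := x + p * C (x % p)
  invFun x := x - p * C (x % p)
  left_inv x := by simp
  right_inv x := by simp [Int.sub_emod]

theorem finsum_hookVal_eq (p : ℕ) (l m : BarPartition) (C : ℤ → ℤ)
    (hC : ∀ x : ℤ, dbl m (x + p * C (x % p)) ↔ dbl l x) :
    ∑ᶠ q, hookVal p l q = ∑ᶠ q, hookVal p m q := by
  refine finsum_eq_of_bijective (Equiv.prodCongr (shiftEquiv p C) (shiftEquiv p C))
    (Equiv.bijective _) ?_
  rintro ⟨x, y⟩
  change hookVal p l (x, y) = hookVal p m (x + p * C (x % p), y + p * C (y % p))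
  unfold hookVal
  by_cases h : dbl l x ∧ ¬ dbl l y
  · have h' : dbl m (x + p * C (x % p)) ∧ ¬ dbl m (y + p * C (y % p)) := by rwa [hC, hC]
    rw [if_pos h, if_pos h']
    by_cases hd : x % p = y % p
    · rw [hd]; congr 2; ring
    · have aux : ∀ z : ℤ, ¬ ((p : ℤ) ∣ z) → padicValNat p z.toNat = 0 := by
        intro z hz
        rcases le_or_gt z 0 with h0 | h0
        · simp [Int.toNat_of_nonpos h0]
        · apply padicValNat.eq_zero_of_not_dvd
          intro h2; apply hz
          have : ((z.toNat : ℕ) : ℤ) = z := Int.toNat_of_nonneg h0.le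
          rw [← this]; exact_mod_cast h2
      have hxy : ¬ ((p : ℤ) ∣ x - y) := fun h2 => hd (Int.emod_eq_emod_iff_emod_sub_eq_zero.mpr
        (Int.emod_eq_zero_of_dvd h2))
      rw [aux _ hxy, aux]
      intro h2; apply hxy
      have e : x - y = (x + p * C (x % p) - (y + p * C (y % p)))
          - p * (C (x % p) - C (y % p)) := by ring
      rw [e]
      exact dvd_sub h2 (dvd_mul_right _ _)
  · have h' : ¬ (dbl m (x + p * C (x % p)) ∧ ¬ dbl m (y + p * C (y % p))) := by rwa [hC, hC]
    rw [if_neg h, if_neg h']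

theorem padicValNat_prod_aux (p : ℕ) (hp : p.Prime) {ι : Type*} (s : Finset ι) (f : ι → ℕ)
    (hf : ∀ i ∈ s, f i ≠ 0) :
    padicValNat p (∏ i ∈ s, f i) = ∑ i ∈ s, padicValNat p (f i) := by
  classical
  have := Fact.mk hp
  induction s using Finset.induction_on with
  | empty => simp
  | insert a s ha ih =>
    rw [Finset.prod_insert ha, Finset.sum_insert ha,
      padicValNat.mul (hf a (Finset.mem_insert_self _ _))
        (Finset.prod_ne_zero_iff.mpr fun i hi => hf i (Finset.mem_insert_of_mem hi)),
      ih fun i hi => hf i (Finset.mem_insert_of_mem hi)]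

/-- Sum form of the valuation of the product of bar lengths. -/
theorem padicValNat_barLengthsProd (p : ℕ) (hp : p.Prime) (l : BarPartition) :
    padicValNat p (barLengthsProd l) =
      (∑ a ∈ l.parts, ∑ b ∈ l.parts.filter (· < a), padicValNat p (a + b)) +
      ∑ a ∈ l.parts, ∑ c ∈ (Finset.range a).filter (· ∉ l.parts), padicValNat p (a - c) := by
  have := Fact.mk hp
  have h1 : ∀ a ∈ l.parts, ∏ b ∈ l.parts.filter (· < a), (a + b) ≠ 0 := by
    intro a ha
    rw [Finset.prod_ne_zero_iff]
    intro b hb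
    have := (Finset.mem_filter.mp hb).2
    omega
  have h2 : ∀ a ∈ l.parts,
      ∏ m ∈ (Finset.Icc 1 a).filter (fun m => ∀ b ∈ l.parts, b < a → m ≠ a - b), m ≠ 0 := by
    intro a ha
    rw [Finset.prod_ne_zero_iff]
    intro b hb
    have := Finset.mem_Icc.mp (Finset.mem_filter.mp hb).1
    omega
  unfold barLengthsProd
  rw [padicValNat_prod_aux p hp _ _ fun a ha => mul_ne_zero (h1 a ha) (h2 a ha),
    ← Finset.sum_add_distrib]
  refine Finset.sum_congr rfl fun a ha => ?_
  rw [padicValNat.mul (h1 a ha) (h2 a ha),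
    padicValNat_prod_aux p hp _ _ (Finset.prod_ne_zero_iff.mp (h1 a ha)),
    padicValNat_prod_aux p hp _ _ (Finset.prod_ne_zero_iff.mp (h2 a ha))]
  congr 1
  refine Finset.sum_nbij' (fun m => a - m) (fun c => a - c) ?_ ?_ ?_ ?_ ?_
  · intro m hm
    simp only [Finset.mem_filter, Finset.mem_Icc, Finset.mem_range] at hm ⊢
    refine ⟨by omega, fun h => hm.2 _ h (by omega) (by omega)⟩
  · intro c hc
    simp only [Finset.mem_filter, Finset.mem_Icc, Finset.mem_range] at hc ⊢
    refine ⟨by omega, fun b hb hba h => hc.2 ?_⟩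
    obtain rfl : c = b := by omega
    exact hb
  · intro m hm
    simp only [Finset.mem_filter, Finset.mem_Icc] at hm
    omega
  · intro m hm
    simp only [Finset.mem_filter, Finset.mem_range] at hm
    omega
  · intro m hm
    simp only [Finset.mem_filter, Finset.mem_Icc] at hm
    congr 1; omega

theorem dbl_pos (l : BarPartition) (a : ℕ) : dbl l (a : ℤ) ↔ a ∈ l.parts := by
  unfold dbl
  have h1 : ¬ ((a : ℤ) < 0) := by omega
  simp only [h1, false_and, or_false, Int.toNat_natCast]
  refine ⟨fun h => h.2, fun h => ⟨?_, h⟩⟩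
  have : a ≠ 0 := by rintro rfl; exact l.zero_not_mem h
  omega

theorem dbl_negNat (l : BarPartition) (a : ℕ) : dbl l (-(a : ℤ)) ↔ 0 < a ∧ a ∉ l.parts := by
  by_cases h : a = 0
  · subst h; simp [dbl]
  · rw [dbl_neg _ _ (by exact_mod_cast h), dbl_pos]
    simp; omega

theorem sum_pairs (p : ℕ) (hp : p.Prime) (hpodd : Odd p) (P : Finset ℕ) (hP : 0 ∉ P) :
    ∑ a ∈ P, ∑ b ∈ P, padicValNat p (a + b) =
      2 * (∑ a ∈ P, ∑ b ∈ P.filter (· < a), padicValNat p (a + b)) +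
        ∑ a ∈ P, padicValNat p a := by
  have := Fact.mk hp
  have h1 : ∀ a ∈ P, ∑ b ∈ P, padicValNat p (a + b) =
      ∑ b ∈ P.filter (· < a), padicValNat p (a + b) +
      (∑ b ∈ P.filter (a < ·), padicValNat p (a + b) + padicValNat p a) := by
    intro a ha
    have ha0 : a ≠ 0 := by rintro rfl; exact hP ha
    have hd : padicValNat p (a + a) = padicValNat p a := by
      rw [← two_mul, padicValNat.mul two_ne_zero ha0, padicValNat.eq_zero_of_not_dvd, zero_add]
      intro h
      have := Nat.le_of_dvd two_pos h
      have := hp.two_le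
      obtain ⟨q, hq⟩ := hpodd
      omega
    rw [← Finset.sum_filter_add_sum_filter_not P (· < a)]
    congr 1
    have e : P.filter (fun b => ¬ b < a) = insert a (P.filter (a < ·)) := by
      ext b
      simp only [Finset.mem_filter, Finset.mem_insert]
      constructor
      · rintro ⟨h, h'⟩
        by_cases hb : b = a
        · exact Or.inl hb
        · exact Or.inr ⟨h, by omega⟩
      · rintro (rfl | ⟨h, h'⟩)
        · exact ⟨ha, by omega⟩
        · exact ⟨h, by omega⟩
    rw [e, Finset.sum_insert (by simp), hd, add_comm]
  have h2 : ∑ a ∈ P, ∑ b ∈ P.filter (a < ·), padicValNat p (a + b) =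
      ∑ a ∈ P, ∑ b ∈ P.filter (· < a), padicValNat p (a + b) := by
    rw [Finset.sum_comm' (t' := P) (s' := fun b => P.filter (· < b))]
    · refine Finset.sum_congr rfl fun a _ => Finset.sum_congr rfl fun b _ => ?_
      rw [add_comm]
    · intro x y
      simp only [Finset.mem_filter]
      tauto
  rw [Finset.sum_congr rfl h1, Finset.sum_add_distrib, Finset.sum_add_distrib, h2]
  ring

theorem sum_gaps (p : ℕ) (P : Finset ℕ) (hP : 0 ∉ P) :
    ∑ a ∈ P, ∑ c ∈ (Finset.range a).filter (· ∉ P), padicValNat p (a - c) =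
      ∑ a ∈ P, ∑ c ∈ (Finset.range a).filter (fun c => 0 < c ∧ c ∉ P), padicValNat p (a - c) +
        ∑ a ∈ P, padicValNat p a := by
  rw [← Finset.sum_add_distrib]
  refine Finset.sum_congr rfl fun a ha => ?_
  have ha0 : a ≠ 0 := by rintro rfl; exact hP ha
  have e : (Finset.range a).filter (· ∉ P) =
      insert 0 ((Finset.range a).filter (fun c => 0 < c ∧ c ∉ P)) := by
    ext c
    simp only [Finset.mem_filter, Finset.mem_insert, Finset.mem_range]
    constructor
    · rintro ⟨h, h'⟩
      by_cases hc : c = 0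
      · exact Or.inl hc
      · exact Or.inr ⟨h, by omega, h'⟩
    · rintro (rfl | ⟨h, h', h''⟩)
      · exact ⟨by omega, hP⟩
      · exact ⟨h, h''⟩
  rw [e, Finset.sum_insert (by simp), add_comm]
  simp

theorem finsum_hookVal (p : ℕ) (hp : p.Prime) (hpodd : Odd p) (l : BarPartition) :
    ∑ᶠ q, hookVal p l q = 2 * padicValNat p (barLengthsProd l) := by
  classical
  let T1 : Finset (Σ _ : ℕ, ℕ) := l.parts.sigma fun a => (Finset.range a).filter (· ∉ l.parts)
  let T2 : Finset (Σ _ : ℕ, ℕ) := l.parts.sigma fun _ => l.parts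
  let T3 : Finset (Σ _ : ℕ, ℕ) := l.parts.sigma fun a =>
    (Finset.range a).filter (fun c => 0 < c ∧ c ∉ l.parts)
  let e1 : (Σ _ : ℕ, ℕ) → ℤ × ℤ := fun q => ((q.1 : ℤ), (q.2 : ℤ))
  let e2 : (Σ _ : ℕ, ℕ) → ℤ × ℤ := fun q => ((q.1 : ℤ), -(q.2 : ℤ))
  let e3 : (Σ _ : ℕ, ℕ) → ℤ × ℤ := fun q => (-(q.2 : ℤ), -(q.1 : ℤ))
  have i1 : Function.Injective e1 := by
    rintro ⟨a, b⟩ ⟨c, d⟩ h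
    simp only [e1, Prod.mk.injEq] at h
    obtain rfl : a = c := by omega
    obtain rfl : b = d := by omega
    rfl
  have i2 : Function.Injective e2 := by
    rintro ⟨a, b⟩ ⟨c, d⟩ h
    simp only [e2, Prod.mk.injEq] at h
    obtain rfl : a = c := by omega
    obtain rfl : b = d := by omega
    rfl
  have i3 : Function.Injective e3 := by
    rintro ⟨a, b⟩ ⟨c, d⟩ h
    simp only [e3, Prod.mk.injEq] at h
    obtain rfl : a = c := by omega
    obtain rfl : b = d := by omega
    rfl
  have hpos : ∀ a ∈ l.parts, 0 < a := by
    intro a ha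
    rcases Nat.eq_zero_or_pos a with h | h
    · subst h; exact absurd ha l.zero_not_mem
    · exact h
  have hsupp : Function.support (hookVal p l) ⊆
      ((T1.image e1 ∪ (T2.image e2 ∪ T3.image e3) : Finset (ℤ × ℤ)) : Set (ℤ × ℤ)) := by
    rintro ⟨x, y⟩ hq
    rw [Function.mem_support] at hq
    unfold hookVal at hq
    have hd : dbl l x ∧ ¬ dbl l y := by
      by_contra h; exact hq (if_neg h)
    have hlt : y < x := by
      by_contra h
      apply hq
      rw [if_pos hd, Int.toNat_of_nonpos (by simpa using h)]
      simp
    simp only [Finset.coe_union, Finset.coe_image, Set.mem_union, Set.mem_image, Finset.mem_coe]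
    obtain ⟨a, rfl | rfl⟩ := Int.eq_nat_or_neg x
    · obtain ⟨b, rfl | rfl⟩ := Int.eq_nat_or_neg y
      · rw [dbl_pos, dbl_pos] at hd
        left
        refine ⟨⟨a, b⟩, ?_, rfl⟩
        simp only [T1, Finset.mem_sigma, Finset.mem_filter, Finset.mem_range]
        exact ⟨hd.1, by omega, hd.2⟩
      · rw [dbl_pos, dbl_negNat] at hd
        by_cases hb : b = 0
        · subst hb
          left
          refine ⟨⟨a, 0⟩, ?_, by simp [e1]⟩
          simp only [T1, Finset.mem_sigma, Finset.mem_filter, Finset.mem_range]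
          exact ⟨hd.1, by omega, l.zero_not_mem⟩
        · right; left
          refine ⟨⟨a, b⟩, ?_, rfl⟩
          simp only [T2, Finset.mem_sigma]
          refine ⟨hd.1, ?_⟩
          by_contra h
          exact hd.2 ⟨by omega, h⟩
    · obtain ⟨b, rfl | rfl⟩ := Int.eq_nat_or_neg y
      · exfalso; omega
      · rw [dbl_negNat, dbl_negNat] at hd
        right; right
        refine ⟨⟨b, a⟩, ?_, rfl⟩
        simp only [T3, Finset.mem_sigma, Finset.mem_filter, Finset.mem_range]
        refine ⟨?_, by omega, hd.1⟩
        by_contra h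
        exact hd.2 ⟨by omega, h⟩
  have d23 : Disjoint (T2.image e2) (T3.image e3) := by
    rw [Finset.disjoint_left]
    intro q h2 h3
    obtain ⟨⟨a, b⟩, hab, rfl⟩ := Finset.mem_image.mp h2
    obtain ⟨⟨c, d⟩, hcd, h⟩ := Finset.mem_image.mp h3
    simp only [e2, e3, Prod.mk.injEq] at h
    have := hpos a (Finset.mem_sigma.mp hab).1
    omega
  have d1 : Disjoint (T1.image e1) (T2.image e2 ∪ T3.image e3) := by
    rw [Finset.disjoint_left]
    intro q h1 h2
    obtain ⟨⟨a, b⟩, hab, rfl⟩ := Finset.mem_image.mp h1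
    have ha := hpos a (Finset.mem_sigma.mp hab).1
    rcases Finset.mem_union.mp h2 with h2 | h2
    · obtain ⟨⟨c, d⟩, hcd, h⟩ := Finset.mem_image.mp h2
      simp only [e1, e2, Prod.mk.injEq] at h
      have := hpos d (Finset.mem_sigma.mp hcd).2
      omega
    · obtain ⟨⟨c, d⟩, hcd, h⟩ := Finset.mem_image.mp h2
      simp only [e1, e3, Prod.mk.injEq] at h
      omega
  have s1 : ∑ q ∈ T1, hookVal p l (e1 q) =
      ∑ a ∈ l.parts, ∑ c ∈ (Finset.range a).filter (· ∉ l.parts), padicValNat p (a - c) := by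
    rw [Finset.sum_sigma]
    refine Finset.sum_congr rfl fun a ha => Finset.sum_congr rfl fun c hc => ?_
    simp only [Finset.mem_filter, Finset.mem_range] at hc
    simp only [hookVal, e1, dbl_pos]
    rw [if_pos ⟨ha, hc.2⟩]
    congr 1; omega
  have s2 : ∑ q ∈ T2, hookVal p l (e2 q) =
      ∑ a ∈ l.parts, ∑ b ∈ l.parts, padicValNat p (a + b) := by
    rw [Finset.sum_sigma]
    refine Finset.sum_congr rfl fun a ha => Finset.sum_congr rfl fun c hc => ?_
    simp only [hookVal, e2, dbl_pos, dbl_negNat]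
    rw [if_pos ⟨ha, fun h => h.2 hc⟩]
    congr 1; omega
  have s3 : ∑ q ∈ T3, hookVal p l (e3 q) =
      ∑ a ∈ l.parts, ∑ c ∈ (Finset.range a).filter (fun c => 0 < c ∧ c ∉ l.parts),
        padicValNat p (a - c) := by
    rw [Finset.sum_sigma]
    refine Finset.sum_congr rfl fun a ha => Finset.sum_congr rfl fun c hc => ?_
    simp only [Finset.mem_filter, Finset.mem_range] at hc
    simp only [hookVal, e3, dbl_negNat]
    rw [if_pos ⟨hc.2, fun h => h.2 ha⟩]
    congr 1; omega
  rw [finsum_eq_sum_of_support_subset _ hsupp, Finset.sum_union d1, Finset.sum_union d23,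
    Finset.sum_image i1.injOn, Finset.sum_image i2.injOn, Finset.sum_image i3.injOn,
    s1, s2, s3, padicValNat_barLengthsProd p hp, sum_pairs p hp hpodd _ l.zero_not_mem,
    sum_gaps p _ l.zero_not_mem]
  ring

/-- Let `p` be an odd prime and `λ` a bar-partition of `n` whose `p`-bar
core has size `r < p` and whose `p`-bar weight is `w` (so `n = r + pw`). Then
`ν_p(n!) − ν_p(H(λ)) = ν_p((pw)!) − ν_p(H(λ^[p̄]))`. -/
theorem padicVal_factorial_sub_barLengthsProd (p : ℕ) (hp : p.Prime) (hpodd : Odd p)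
    (l κ μ : BarPartition) (w : ℕ)
    (hκ : IsBarCoreOf p l κ) (hr : κ.size < p) (hw : l.size = κ.size + p * w)
    (hμ : IsBarCocoreOf p l μ) :
    (padicValNat p (Nat.factorial l.size) : ℤ) - padicValNat p (barLengthsProd l) =
      (padicValNat p (Nat.factorial (p * w)) : ℤ) - padicValNat p (barLengthsProd μ) := by
  obtain ⟨C, hC⟩ := exists_shift p hp.pos hpodd l μ hμ.2
  have h1 := finsum_hookVal_eq p l μ C hC
  rw [finsum_hookVal p hp hpodd, finsum_hookVal p hp hpodd] at h1
  have h2 : padicValNat p (barLengthsProd l) = padicValNat p (barLengthsProd μ) := by omega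
  have := Fact.mk hp
  have h3 : padicValNat p (Nat.factorial l.size) = padicValNat p (Nat.factorial (p * w)) := by
    rw [hw, add_comm, padicValNat_factorial_mul_add w hr]
  rw [h2, h3]
end

section
/- Let p be an odd prime. The bar-partitions of p with empty p-bar core are exactly (p) and (p − k, k) for 1 ≤ k ≤ (p−1)/2; in particular there are (p+1)/2 of them. Moreover sgn((p)) = 1 and sgn((p − k, k)) = −1 for every 1 ≤ k ≤ (p−1)/2. -/
open scoped BigOperators

theorem barCocores_parts_eq (l : BarPartition) (S : Finset ℕ) (h : S ⊆ l.parts)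
    (hs : ∑ a ∈ S, a = l.size) : l.parts = S := by
  have h1 := Finset.sum_sdiff (f := fun a : ℕ => a) h
  have h2 : ∑ a ∈ l.parts \ S, a = 0 := by
    unfold BarPartition.size at hs
    omega
  rw [Finset.sum_eq_zero_iff] at h2
  refine (Finset.Subset.antisymm h ?_).symm
  intro x hx
  by_contra hxS
  have := h2 x (Finset.mem_sdiff.2 ⟨hx, hxS⟩)
  subst this
  exact l.zero_not_mem hx

/-- Let `p` be an odd prime. The bar-partitions of `p` with empty `p`-bar
core are exactly `(p)` and `(p − k, k)` for `1 ≤ k ≤ (p−1)/2`; in particular there are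
`(p+1)/2` of them. Moreover `sgn((p)) = 1` and `sgn((p − k, k)) = −1` for all such `k`. -/
theorem barCocores_of_size_p (p : ℕ) (hp : p.Prime) (hpodd : Odd p) :
    (∀ l : BarPartition, l.size = p →
      (HasEmptyBarCore p l ↔
        l.parts = {p} ∨ ∃ k : ℕ, 1 ≤ k ∧ k ≤ (p - 1) / 2 ∧ l.parts = {p - k, k})) ∧
    (insert ({p} : Finset ℕ)
        ((Finset.Icc 1 ((p - 1) / 2)).image fun k => ({p - k, k} : Finset ℕ))).card
      = (p + 1) / 2 ∧
    (∀ l : BarPartition, l.parts = {p} → l.sgn = 1) ∧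
    (∀ l : BarPartition, ∀ k : ℕ, 1 ≤ k → k ≤ (p - 1) / 2 → l.parts = {p - k, k} →
      l.sgn = -1) := by
  have hp2 := hp.two_le
  refine ⟨?_, ?_, ?_, ?_⟩
  · intro l hl
    constructor
    · intro h
      rcases Relation.ReflTransGen.cases_head h with h | ⟨ν, h, -⟩
      · subst h
        simp [BarPartition.size, BarPartition.empty] at hl
        omega
      · rcases h with ⟨a, ha, hpa, -⟩ | ⟨hm, -⟩ | ⟨a, ha, b, hb, hab, hsum, -⟩
        · have : a ≤ l.size := Finset.single_le_sum (f := fun a : ℕ => a)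
            (fun _ _ => Nat.zero_le _) ha
          omega
        · left
          exact barCocores_parts_eq l {p} (by simpa using hm) (by simp [hl])
        · right
          have hE : l.parts = {a, b} := by
            apply barCocores_parts_eq
            · intro x hx
              simp only [Finset.mem_insert, Finset.mem_singleton] at hx
              rcases hx with rfl | rfl <;> assumption
            · rw [Finset.sum_pair hab, hl, hsum]
          have ha0 : a ≠ 0 := fun h0 => l.zero_not_mem (h0 ▸ ha)
          have hb0 : b ≠ 0 := fun h0 => l.zero_not_mem (h0 ▸ hb)
          rcases lt_or_gt_of_ne hab with hlt | hlt
          · refine ⟨a, by omega, by omega, ?_⟩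
            rw [hE, Finset.pair_comm, show p - a = b by omega]
          · refine ⟨b, by omega, by omega, ?_⟩
            rw [hE, show p - b = a by omega]
    · rintro (h | ⟨k, hk1, hk2, h⟩)
      · apply Relation.ReflTransGen.single
        right; left
        simp [h, BarPartition.empty]
      · apply Relation.ReflTransGen.single
        right; right
        refine ⟨p - k, by simp [h], k, by simp [h], by omega, by omega, ?_⟩
        rw [h]
        ext x
        simp [BarPartition.empty]
        tauto
  · rw [Finset.card_insert_of_notMem, Finset.card_image_of_injOn]
    · obtain ⟨m, rfl⟩ := hpodd
      simp
      omega
    · intro a ha b hb hab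
      simp only [Finset.coe_Icc, Set.mem_Icc] at ha hb
      have : a ∈ ({p - b, b} : Finset ℕ) := by
        rw [← show ({p - a, a} : Finset ℕ) = {p - b, b} from hab]
        simp
      simp only [Finset.mem_insert, Finset.mem_singleton] at this
      omega
    · intro hmem
      simp only [Finset.mem_image, Finset.mem_Icc] at hmem
      obtain ⟨k, hk, he⟩ := hmem
      have : k ∈ ({p} : Finset ℕ) := by
        rw [← he]
        simp
      simp only [Finset.mem_singleton] at this
      omega
  · intro l h
    simp only [BarPartition.sgn, BarPartition.size, BarPartition.length, h,
      Finset.sum_singleton, Finset.card_singleton]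
    apply Even.neg_one_pow
    obtain ⟨m, rfl⟩ := hpodd
    exact ⟨m, by omega⟩
  · intro l k hk1 hk2 h
    have hne : p - k ≠ k := by omega
    simp only [BarPartition.sgn, BarPartition.size, BarPartition.length, h,
      Finset.sum_pair hne, Finset.card_pair hne]
    apply Odd.neg_one_pow
    obtain ⟨m, rfl⟩ := hpodd
    exact ⟨m - 1, by omega⟩
end

section
/- Let p be an odd prime, let w ≥ 1, and let κ and κ′ be p-bar cores (bar-partitions admitting no p-bar removal). For every bar-partition λ with p-bar core κ and p-bar weight w there is a unique bar-partition Ψ(λ) with p-bar core κ′ and the same p-bar quotient as λ; the resulting map Ψ is a bijection from the set of bar-partitions with p-bar core κ and p-bar weight w onto the set of bar-partitions with p-bar core κ′ and p-bar weight w, and it satisfies sgn(Ψ(λ)) = sgn(κ)·sgn(κ′)·sgn(λ). In particular, Ψ preserves signs when sgn(κ) = sgn(κ′) and reverses them when sgn(κ) = −sgn(κ′). -/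
open scoped BigOperators

namespace BarAux

/-- Doubled bead set: positive `n` is a bead iff it is a part, negative `n` iff `-n` is not. -/
def bd (l : BarPartition) (n : ℤ) : Prop :=
  (0 < n ∧ n.natAbs ∈ l.parts) ∨ (n < 0 ∧ n.natAbs ∉ l.parts)

lemma bp_ext {l m : BarPartition} (h : ∀ a, a ∈ l.parts ↔ a ∈ m.parts) : l = m := by
  cases l; cases m
  simp only [BarPartition.mk.injEq]
  exact Finset.ext h

lemma bd_natCast (l : BarPartition) (a : ℕ) : bd l (a : ℤ) ↔ a ∈ l.parts := by
  unfold bd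
  have := l.zero_not_mem
  rcases Nat.eq_zero_or_pos a with rfl | h
  · simp [this]
  · constructor
    · rintro (⟨_, h⟩ | ⟨h, _⟩)
      · simpa using h
      · omega
    · intro h'
      left
      exact ⟨by omega, by simpa using h'⟩

lemma bd_neg_natCast (l : BarPartition) (a : ℕ) (ha : 0 < a) : bd l (-(a : ℤ)) ↔ a ∉ l.parts := by
  unfold bd
  constructor
  · rintro (⟨h, _⟩ | ⟨_, h⟩)
    · omega
    · simpa using h
  · intro h'
    right
    exact ⟨by omega, by simpa using h'⟩

lemma bd_ext {l m : BarPartition} (h : ∀ n, bd l n ↔ bd m n) : l = m :=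
  bp_ext fun a => by rw [← bd_natCast, ← bd_natCast, h]

lemma not_bd_zero (l : BarPartition) : ¬ bd l 0 := by
  rintro (⟨h, _⟩ | ⟨h, _⟩) <;> omega

/-- Toggle the parts `|n|` and `|n-t|`. -/
def tog (t : ℕ) (l : BarPartition) (n : ℤ) : BarPartition :=
  ⟨(symmDiff l.parts {n.natAbs, (n - t).natAbs}).erase 0, by simp⟩

lemma mem_tog (t : ℕ) (l : BarPartition) (n : ℤ) (a : ℕ) :
    a ∈ (tog t l n).parts ↔
      a ≠ 0 ∧ ¬ (a ∈ l.parts ↔ (a = n.natAbs ∨ a = (n - t).natAbs)) := by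
  simp only [tog, Finset.mem_erase, Finset.mem_symmDiff, Finset.mem_insert, Finset.mem_singleton]
  tauto

lemma bd_tog (t : ℕ) (l : BarPartition) (n x : ℤ) :
    bd (tog t l n) x ↔
      x ≠ 0 ∧ ¬ (bd l x ↔ (x = n ∨ x = -n ∨ x = n - t ∨ x = -(n - t))) := by
  have e : (x.natAbs = n.natAbs ∨ x.natAbs = (n - t).natAbs) ↔
      (x = n ∨ x = -n ∨ x = n - t ∨ x = -(n - t)) := by omega
  unfold bd
  rw [mem_tog, e]
  generalize (x = n ∨ x = -n ∨ x = n - t ∨ x = -(n - t)) = Q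
  generalize hP : (x.natAbs ∈ l.parts) = P
  rcases lt_trichotomy x 0 with h | h | h
  · have h1 : ¬ 0 < x := by omega
    have h2 : x ≠ 0 := by omega
    by_cases hp : P <;> by_cases hq : Q <;> simp [h, h1, h2, hp, hq]
  · subst h; simp
  · have h1 : ¬ x < 0 := by omega
    have h2 : x ≠ 0 := by omega
    by_cases hp : P <;> by_cases hq : Q <;> simp [h, h1, h2, hp, hq]

lemma tog_tog (t : ℕ) (l : BarPartition) (n : ℤ) : tog t (tog t l n) n = l := by
  apply bp_ext
  intro a
  rw [mem_tog, mem_tog]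
  by_cases h : a = 0
  · subst h
    simp [l.zero_not_mem]
  · tauto

lemma parts_inj {l m : BarPartition} (h : l.parts = m.parts) : l = m :=
  bp_ext fun a => by rw [h]

lemma removal_iff {t : ℕ} (ht : Odd t) (l l' : BarPartition) :
    BarRemoval t l l' ↔ ∃ n : ℤ, bd l n ∧ ¬ bd l (n - t) ∧ l' = tog t l n := by
  have h0 := l.zero_not_mem
  obtain ⟨s, hs⟩ := ht
  constructor
  · rintro (⟨a, ha, hta, hn, h⟩ | ⟨ha, h⟩ | ⟨a, ha, b, hb, hab, hs', h⟩)
    · refine ⟨a, (bd_natCast l a).2 ha, ?_, ?_⟩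
      · have : (a : ℤ) - t = ((a - t : ℕ) : ℤ) := by omega
        rw [this, bd_natCast]; exact hn
      · apply bp_ext
        intro x
        have e1 : (a : ℤ).natAbs = a := by omega
        have e2 : ((a : ℤ) - t).natAbs = a - t := by omega
        rw [mem_tog, h, e1, e2, Finset.mem_insert, Finset.mem_erase]
        have e3 : a - t ≠ a := by omega
        have e4 : a - t ≠ 0 := by omega
        by_cases hx : x = a - t
        · subst hx; simp [hn, e4]
        · by_cases hx' : x = a
          · subst hx'; simp [ha, hx]
          · simp only [hx, hx']
            have : x ∈ l.parts → x ≠ 0 := fun h h' => h0 (h' ▸ h)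
            tauto
    · refine ⟨t, (bd_natCast l t).2 ha, by simpa using not_bd_zero l, ?_⟩
      apply bp_ext
      intro x
      rw [mem_tog, h, Finset.mem_erase]
      have : x ∈ l.parts → x ≠ 0 := fun h h' => h0 (h' ▸ h)
      by_cases hx : x = t
      · subst hx; simp [ha]
      · simp only [hx, Int.natAbs_natCast, sub_self, Int.natAbs_zero]
        tauto
    · have hb0 : 0 < b := Nat.pos_of_ne_zero fun h' => h0 (h' ▸ hb)
      have e : (a : ℤ) - t = -(b : ℤ) := by omega
      refine ⟨a, (bd_natCast l a).2 ha, ?_, ?_⟩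
      · rw [e, bd_neg_natCast l b hb0]; simpa using hb
      · apply bp_ext
        intro x
        rw [mem_tog, h, e, Finset.mem_erase, Finset.mem_erase]
        have : x ∈ l.parts → x ≠ 0 := fun h h' => h0 (h' ▸ h)
        have e1 : (a : ℤ).natAbs = a := by omega
        have e2 : (-(b : ℤ)).natAbs = b := by omega
        rw [e1, e2]
        by_cases hx : x = a
        · subst hx; simp [ha]
        · by_cases hx' : x = b
          · subst hx'; simp [hb]
          · simp only [hx, hx']
            tauto
  · rintro ⟨n, h1, h2, rfl⟩
    have key : ∀ x, x ∈ l.parts → x ≠ 0 := fun x h h' => h0 (h' ▸ h)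
    by_cases hn : n ≤ 0
    · have hn0 : n < 0 := by
        rcases lt_or_eq_of_le hn with h | h
        · exact h
        · subst h; exact absurd h1 (not_bd_zero l)
      obtain ⟨b, rfl⟩ : ∃ b : ℕ, n = -(b : ℤ) := ⟨n.natAbs, by omega⟩
      rw [bd_neg_natCast l b (by omega)] at h1
      have e : -(b : ℤ) - t = -((b + t : ℕ) : ℤ) := by push_cast; ring
      rw [e, bd_neg_natCast l _ (by omega), not_not] at h2
      left
      refine ⟨b + t, h2, by omega, by simpa using h1, ?_⟩
      ext x
      have e1 : (-(b : ℤ)).natAbs = b := by omega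
      have e2 : (-((b + t : ℕ) : ℤ)).natAbs = b + t := by omega
      rw [mem_tog, e, e1, e2, Finset.mem_insert, Finset.mem_erase, Nat.add_sub_cancel]
      have := key x
      by_cases hx : x = b
      · have hb : b ≠ 0 := by omega
        subst hx; simp [h1, hb]
      · by_cases hx' : x = b + t
        · have ht0 : t ≠ 0 := by omega
          subst hx'; simp [h2, ht0]
        · simp only [hx, hx']
          tauto
    · obtain ⟨a, rfl⟩ : ∃ a : ℕ, n = (a : ℤ) := ⟨n.natAbs, by omega⟩
      rw [bd_natCast] at h1
      rcases lt_trichotomy a t with hat | hat | hat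
      · right; right
        obtain ⟨b, hb⟩ : ∃ b, a + b = t := ⟨t - a, by omega⟩
        have e : (a : ℤ) - t = -(b : ℤ) := by omega
        rw [e, bd_neg_natCast l _ (by omega), not_not] at h2
        refine ⟨a, h1, b, h2, by omega, hb, ?_⟩
        ext x
        have e1 : (a : ℤ).natAbs = a := by omega
        have e2 : (-(b : ℤ)).natAbs = b := by omega
        rw [mem_tog, e, e1, e2, Finset.mem_erase, Finset.mem_erase]
        have := key x
        by_cases hx : x = a
        · subst hx; simp [h1]
        · by_cases hx' : x = b
          · subst hx'; simp [h2]
          · simp only [hx, hx']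
            tauto
      · subst hat
        right; left
        refine ⟨h1, ?_⟩
        ext x
        rw [mem_tog, Finset.mem_erase]
        have := key x
        by_cases hx : x = a
        · subst hx; simp [h1]
        · simp only [hx, Int.natAbs_natCast, sub_self, Int.natAbs_zero]
          tauto
      · left
        have e : (a : ℤ) - t = ((a - t : ℕ) : ℤ) := by omega
        rw [e, bd_natCast] at h2
        refine ⟨a, h1, hat, h2, ?_⟩
        ext x
        have e1 : (a : ℤ).natAbs = a := by omega
        have e2 : ((a - t : ℕ) : ℤ).natAbs = a - t := by omega
        rw [mem_tog, e, e1, e2, Finset.mem_insert, Finset.mem_erase]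
        have := key x
        have e4 : a - t ≠ 0 := by omega
        by_cases hx : x = a - t
        · subst hx; simp [h2, e4]
        · by_cases hx' : x = a
          · subst hx'; simp [h1, hx]
          · simp only [hx, hx']
            tauto

/-- The beads of `m` are those of `l` moved by the odd periodic shift `c`. -/
structure SameQ (t : ℕ) (c : ℤ → ℤ) (l m : BarPartition) : Prop where
  per : Function.Periodic c (t : ℤ)
  odd : ∀ n, c (-n) = -c n
  bead : ∀ n, bd m (n + t * c n) ↔ bd l n

lemma per_mul {t : ℕ} {c : ℤ → ℤ} (h : Function.Periodic c (t : ℤ)) (n k : ℤ) :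
    c (n + t * k) = c n := by
  have := h.int_mul k n
  rw [mul_comm]; simpa using this

lemma SameQ.symm {t : ℕ} {c : ℤ → ℤ} {l m : BarPartition} (h : SameQ t c l m) :
    SameQ t (fun n => - c n) m l where
  per n := by simp [h.per n]
  odd n := by simp [h.odd n]
  bead n := by
    rw [← h.bead]
    rw [per_mul h.per]
    ring_nf

lemma SameQ.inj {t : ℕ} {c : ℤ → ℤ} {l m : BarPartition} (h : SameQ t c l m) (x y : ℤ) :
    x + t * c x = y + t * c y ↔ x = y := by
  constructor
  · intro e
    have : x = y + t * (c y - c x) := by linarith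
    have h2 : c x = c y := by
      conv_lhs => rw [this]
      exact per_mul h.per _ _
    rw [h2] at e
    linarith
  · rintro rfl; rfl

lemma SameQ.tog {t : ℕ} {c : ℤ → ℤ} {l m : BarPartition} (h : SameQ t c l m) (n : ℤ) :
    SameQ t c (tog t l n) (tog t m (n + t * c n)) where
  per := h.per
  odd := h.odd
  bead x := by
    have c0 : c 0 = 0 := by have := h.odd 0; simp at this; omega
    have a0 : x + t * c x = 0 ↔ x = 0 := by
      have := h.inj x 0; rw [c0] at this; simpa using this
    have a1 := h.inj x n
    have a2 : x + t * c x = -(n + t * c n) ↔ x = -n := by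
      rw [← h.inj x (-n), h.odd]; ring_nf
    have cm : c (n - t) = c n := h.per.sub_eq n
    have a3 : x + t * c x = n + t * c n - t ↔ x = n - t := by
      rw [← h.inj x (n - t), cm]; ring_nf
    have a4 : x + t * c x = -(n + t * c n - t) ↔ x = -(n - t) := by
      rw [← h.inj x (-(n - t)), h.odd, cm]; ring_nf
    rw [bd_tog, bd_tog, ne_eq, a0, a1, a2, a3, a4, h.bead]

lemma SameQ.bead_sub {t : ℕ} {c : ℤ → ℤ} {l m : BarPartition} (h : SameQ t c l m) (n : ℤ) :
    bd m (n + t * c n - t) ↔ bd l (n - t) := by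
  rw [← h.bead (n - t), h.per.sub_eq n]; ring_nf

lemma SameQ.down {t : ℕ} (ht : Odd t) {c : ℤ → ℤ} {l m l' : BarPartition} (h : SameQ t c l m)
    (hr : BarRemoval t l l') : ∃ m', BarRemoval t m m' ∧ SameQ t c l' m' := by
  rw [removal_iff ht] at hr
  obtain ⟨n, h1, h2, rfl⟩ := hr
  refine ⟨_, (removal_iff ht _ _).2 ⟨n + t * c n, ?_, ?_, rfl⟩, h.tog n⟩
  · rwa [h.bead]
  · rwa [h.bead_sub]

lemma SameQ.up {t : ℕ} (ht : Odd t) {c : ℤ → ℤ} {l m l' : BarPartition} (h : SameQ t c l m)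
    (hr : BarRemoval t l' l) : ∃ m', BarRemoval t m' m ∧ SameQ t c l' m' := by
  rw [removal_iff ht] at hr
  obtain ⟨n, h1, h2, rfl⟩ := hr
  have h' := h.tog n
  rw [tog_tog] at h'
  refine ⟨_, (removal_iff ht _ _).2 ⟨n + t * c n, ?_, ?_, ?_⟩, h'⟩
  · rwa [h'.bead]
  · rwa [h'.bead_sub]
  · rw [tog_tog]

lemma SameQ.core {t : ℕ} (ht : Odd t) {c : ℤ → ℤ} {l m : BarPartition} (h : SameQ t c l m)
    (hl : IsBarCore t l) : IsBarCore t m := by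
  intro ν hν
  obtain ⟨l', hl', _⟩ := h.symm.down ht hν
  exact hl _ hl'

/-- Effect of one removal on an additive statistic. -/
lemma step_sum {t : ℕ} {l l' : BarPartition} (h : BarRemoval t l l') :
    (∃ a, t < a ∧ ∀ f : ℕ → ℤ,
      ∑ x ∈ l.parts, f x = ∑ x ∈ l'.parts, f x + f a - f (a - t)) ∨
    (∀ f : ℕ → ℤ, ∑ x ∈ l.parts, f x = ∑ x ∈ l'.parts, f x + f t) ∨
    (∃ a b, a + b = t ∧ 0 < a ∧ 0 < b ∧ ∀ f : ℕ → ℤ,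
      ∑ x ∈ l.parts, f x = ∑ x ∈ l'.parts, f x + f a + f b) := by
  have h0 := l.zero_not_mem
  rcases h with ⟨a, ha, hta, hn, h⟩ | ⟨ha, h⟩ | ⟨a, ha, b, hb, hab, hs', h⟩
  · left
    refine ⟨a, hta, fun f => ?_⟩
    rw [h, Finset.sum_insert (by simp [hn]), ← Finset.sum_erase_add _ _ ha]
    ring
  · right; left
    intro f
    rw [h, ← Finset.sum_erase_add _ _ ha]
  · right; right
    have hb0 : 0 < b := Nat.pos_of_ne_zero fun h' => h0 (h' ▸ hb)
    have ha0 : 0 < a := Nat.pos_of_ne_zero fun h' => h0 (h' ▸ ha)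
    refine ⟨a, b, hs', ha0, hb0, fun f => ?_⟩
    rw [h, ← Finset.sum_erase_add _ _ ha,
      ← Finset.sum_erase_add (l.parts.erase a) _ (Finset.mem_erase.2 ⟨hab.symm, hb⟩)]
    ring

lemma step_size {t : ℕ} {l l' : BarPartition} (h : BarRemoval t l l') :
    l.size = l'.size + t := by
  have e : ∀ l : BarPartition, (l.size : ℤ) = ∑ x ∈ l.parts, (fun x : ℕ => (x : ℤ)) x := by
    intro l; simp [BarPartition.size]
  have el := e l
  have el' := e l'
  rcases step_sum h with ⟨a, ha, hf⟩ | hf | ⟨a, b, hab, _, _, hf⟩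
  · rw [hf] at el; simp only at el el'; omega
  · rw [hf] at el; simp only at el el'; omega
  · rw [hf] at el; simp only at el el'; omega

/-- Sign statistic. -/
def sg (l : BarPartition) : ℤ := ∑ a ∈ l.parts, ((a : ℤ) + 1)

/-- Number of parts divisible by `t`. -/
def mu (t : ℕ) (l : BarPartition) : ℤ := ∑ a ∈ l.parts, (if t ∣ a then 1 else 0)

lemma step_sg {t : ℕ} (ht : Odd t) {l l' : BarPartition} (h : BarRemoval t l l') :
    (sg l + mu t l) % 2 = (sg l' + mu t l' + 1) % 2 := by
  obtain ⟨s, hs⟩ := ht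
  unfold sg mu
  rcases step_sum h with ⟨a, ha, hf⟩ | hf | ⟨a, b, hab, ha, hb, hf⟩
  · rw [hf, hf]
    have : t ∣ a - t ↔ t ∣ a := by
      rw [Nat.dvd_sub_iff_left ha.le (dvd_refl t)]
    simp only [this]
    push_cast [ha.le]
    omega
  · rw [hf, hf]
    simp only [dvd_refl, if_true]
    omega
  · rw [hf, hf]
    have h1 : ¬ t ∣ a := fun h => by have := Nat.le_of_dvd ha h; omega
    have h2 : ¬ t ∣ b := fun h => by have := Nat.le_of_dvd hb h; omega
    simp only [h1, h2, if_false]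
    omega

/-- Charge of the residue class of `n`. -/
def chg (t : ℕ) (l : BarPartition) (n : ℤ) : ℤ :=
  ∑ a ∈ l.parts, ((if (t : ℤ) ∣ a - n then 1 else 0) - (if (t : ℤ) ∣ a + n then 1 else 0))

lemma chg_per (t : ℕ) (l : BarPartition) : Function.Periodic (chg t l) (t : ℤ) := by
  intro n
  unfold chg
  refine Finset.sum_congr rfl fun a _ => ?_
  have h1 : (t : ℤ) ∣ a - (n + t) ↔ (t : ℤ) ∣ a - n := by
    rw [show (a : ℤ) - (n + t) = a - n - t by ring, dvd_sub_self_right]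
  have h2 : (t : ℤ) ∣ a + (n + t) ↔ (t : ℤ) ∣ a + n := by
    rw [show (a : ℤ) + (n + t) = a + n + t by ring, dvd_add_self_right]
  simp only [h1, h2]

lemma chg_odd (t : ℕ) (l : BarPartition) (n : ℤ) : chg t l (-n) = - chg t l n := by
  unfold chg
  rw [← Finset.sum_neg_distrib]
  refine Finset.sum_congr rfl fun a _ => ?_
  rw [sub_neg_eq_add, ← sub_eq_add_neg]
  ring

lemma step_chg {t : ℕ} {l l' : BarPartition} (h : BarRemoval t l l') (n : ℤ) :
    chg t l n = chg t l' n := by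
  unfold chg
  rcases step_sum h with ⟨a, ha, hf⟩ | hf | ⟨a, b, hab, ha, hb, hf⟩
  · rw [hf]
    push_cast [ha.le]
    have h1 : (t : ℤ) ∣ a - t - n ↔ (t : ℤ) ∣ a - n := by
      rw [show (a : ℤ) - t - n = a - n - t by ring, dvd_sub_self_right]
    have h2 : (t : ℤ) ∣ a - t + n ↔ (t : ℤ) ∣ a + n := by
      rw [show (a : ℤ) - t + n = a + n - t by ring, dvd_sub_self_right]
    simp only [h1, h2]
    ring
  · rw [hf]
    have h1 : (t : ℤ) ∣ t - n ↔ (t : ℤ) ∣ n := by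
      rw [dvd_sub_right (dvd_refl _)]
    have h2 : (t : ℤ) ∣ t + n ↔ (t : ℤ) ∣ n := by
      rw [dvd_add_right (dvd_refl _)]
    simp only [h1, h2]
    ring
  · rw [hf]
    have e : (b : ℤ) = t - a := by omega
    have h1 : (t : ℤ) ∣ b - n ↔ (t : ℤ) ∣ a + n := by
      rw [e, show (t : ℤ) - a - n = t - (a + n) by ring, dvd_sub_right (dvd_refl _)]
    have h2 : (t : ℤ) ∣ b + n ↔ (t : ℤ) ∣ a - n := by
      rw [e, show (t : ℤ) - a + n = t - (a - n) by ring, dvd_sub_right (dvd_refl _)]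
    simp only [h1, h2]
    ring

lemma rtg_chg {t : ℕ} {l k : BarPartition} (h : Relation.ReflTransGen (BarRemoval t) l k)
    (n : ℤ) : chg t l n = chg t k n := by
  induction h with
  | refl => rfl
  | tail _ h ih => rw [ih, step_chg h]

lemma core_closed {t : ℕ} (ht : Odd t) {k : BarPartition} (hk : IsBarCore t k) (n : ℤ)
    (h : bd k n) : bd k (n - t) := by
  by_contra h'
  exact hk _ ((removal_iff ht _ _).2 ⟨n, h, h', rfl⟩)

lemma core_closed' {t : ℕ} (ht : Odd t) {k : BarPartition} (hk : IsBarCore t k) (n : ℤ) (j : ℕ)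
    (h : bd k n) : bd k (n - t * j) := by
  induction j with
  | zero => simpa using h
  | succ j ih =>
    have := core_closed ht hk _ ih
    convert this using 1
    push_cast; ring

lemma card_res {t r e : ℕ} (hr : r < t) (P : Finset ℕ) (h : ∀ j : ℕ, t * j + r ∈ P ↔ j < e) :
    (P.filter (fun a => a % t = r)).card = e := by
  have : P.filter (fun a => a % t = r) = (Finset.range e).image (fun j => t * j + r) := by
    ext a
    simp only [Finset.mem_filter, Finset.mem_image, Finset.mem_range]
    constructor
    · rintro ⟨ha, hm⟩
      have e : t * (a / t) + r = a := by rw [← hm]; exact Nat.div_add_mod a t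
      exact ⟨a / t, by rw [← h, e]; exact ha, e⟩
    · rintro ⟨j, hj, rfl⟩
      exact ⟨(h j).2 hj, by rw [Nat.mul_add_mod, Nat.mod_eq_of_lt hr]⟩
  rw [this, Finset.card_image_of_injective, Finset.card_range]
  intro x y hxy
  have : t * x = t * y := by simpa using hxy
  exact Nat.eq_of_mul_eq_mul_left (by omega) this

/-- The beads of a core are determined by its charges. -/
lemma core_bd {t : ℕ} (ht : Odd t) {k : BarPartition} (hk : IsBarCore t k) (n : ℤ) :
    bd k n ↔ n / t < chg t k n := by
  have t0 : (0 : ℤ) < t := by obtain ⟨s, hs⟩ := ht; omega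
  obtain ⟨r, hr⟩ : ∃ r : ℕ, (r : ℤ) = n % t := ⟨(n % t).toNat, by
    have := Int.emod_nonneg n t0.ne'; omega⟩
  have hrt : r < t := by have := Int.emod_lt_of_pos n t0; omega
  have hn : n = r + t * (n / t) := by rw [hr]; exact (Int.emod_add_mul_ediv n t).symm
  set i := n / t with hi
  have hc : chg t k n = chg t k r := by
    conv_lhs => rw [hn]
    exact per_mul (chg_per t k) _ _
  rw [hc, hn]
  clear_value i
  clear hc hn hi hr n
  rcases Nat.eq_zero_or_pos r with rfl | hr0
  · have c0 : chg t k 0 = 0 := by have := chg_odd t k 0; simp at this; omega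
    have hneg : ∀ j : ℕ, ¬ bd k (t * j) := by
      intro j h
      have := core_closed' ht hk _ j h
      rw [sub_self] at this
      exact not_bd_zero k this
    simp only [Nat.cast_zero, zero_add]
    rw [c0]
    constructor
    · intro h
      by_contra hi
      obtain ⟨j, rfl⟩ : ∃ j : ℕ, i = j := ⟨i.toNat, by omega⟩
      exact hneg j h
    · intro h
      obtain ⟨j, rfl⟩ : ∃ j : ℕ, i = -(j : ℤ) := ⟨(-i).toNat, by omega⟩
      have e : (t : ℤ) * -(j : ℤ) = -((t * j : ℕ) : ℤ) := by push_cast; ring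
      rw [e, bd_neg_natCast, ← bd_natCast]
      · have := hneg j
        push_cast; exact this
      · have : 0 < t := by omega
        have : 0 < j := by omega
        positivity
  · -- threshold
    obtain ⟨d, hd⟩ : ∃ d : ℤ, ∀ i : ℤ, bd k (r + t * i) ↔ i < d := by
      have down : ∀ i j : ℤ, j ≤ i → bd k (r + t * i) → bd k (r + t * j) := by
        intro i j hij h
        have := core_closed' ht hk _ (i - j).toNat h
        convert this using 1
        have : ((i - j).toNat : ℤ) = i - j := by omega
        rw [this]; ring
      have hub : ∃ b : ℤ, ∀ z : ℤ, ¬ bd k (r + t * z) → b ≤ z := by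
        refine ⟨-((k.parts.sup id : ℕ) : ℤ) - 1, fun z hz => ?_⟩
        by_contra hlt
        push Not at hlt
        apply hz
        right
        have h1 : (t : ℤ) * z ≤ t * (-((k.parts.sup id : ℕ) : ℤ) - 2) := by
          apply mul_le_mul_of_nonneg_left _ t0.le; omega
        have h2 : (t : ℤ) * (-((k.parts.sup id : ℕ) : ℤ) - 2)
            ≤ -((k.parts.sup id : ℕ) : ℤ) - 2 * t := by nlinarith
        refine ⟨by omega, fun hm => ?_⟩
        have := Finset.le_sup (f := id) hm
        simp only [id] at this
        omega
      have hex : ∃ z : ℤ, ¬ bd k (r + t * z) := by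
        refine ⟨((k.parts.sup id : ℕ) : ℤ) + 1, fun h => ?_⟩
        have h1 : ((k.parts.sup id : ℕ) : ℤ) + 1 ≤ t * (((k.parts.sup id : ℕ) : ℤ) + 1) := by
          nlinarith
        rcases h with ⟨_, h⟩ | ⟨h, _⟩
        · have := Finset.le_sup (f := id) h
          simp only [id] at this
          omega
        · omega
      obtain ⟨d, hd, hmin⟩ := Int.exists_least_of_bdd hub hex
      refine ⟨d, fun i => ⟨fun h => ?_, fun h => ?_⟩⟩
      · by_contra hle
        exact hd (down i d (by omega) h)
      · by_contra h'
        have := hmin i h'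
        omega
    rw [hd]
    have A : (k.parts.filter (fun a => a % t = r)).card = d.toNat := by
      apply card_res hrt
      intro j
      rw [← bd_natCast]
      have := hd j
      rw [show ((t * j + r : ℕ) : ℤ) = r + t * j by push_cast; ring, this]
      omega
    have B : (k.parts.filter (fun a => a % t = t - r)).card = (-d).toNat := by
      apply card_res (by omega)
      intro j
      have h1 := bd_neg_natCast k (t * j + (t - r)) (by omega)
      have e : -((t * j + (t - r) : ℕ) : ℤ) = r + t * (-(j : ℤ) - 1) := by
        push_cast [hrt.le]; ring
      rw [e, hd] at h1
      rw [← not_iff_not, ← h1]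
      omega
    have hchg : chg t k r = d := by
      unfold chg
      rw [Finset.sum_sub_distrib, Finset.sum_boole, Finset.sum_boole]
      have e1 : ∀ a : ℕ, ((t : ℤ) ∣ a - r) ↔ a % t = r := by
        intro a
        rw [← Int.modEq_iff_dvd, Int.natCast_modEq_iff, Nat.ModEq, Nat.mod_eq_of_lt hrt]
        exact eq_comm
      have e2 : ∀ a : ℕ, ((t : ℤ) ∣ a + r) ↔ a % t = t - r := by
        intro a
        have : ((t : ℤ) ∣ a + r) ↔ (t : ℤ) ∣ a - ((t - r : ℕ) : ℤ) := by
          rw [show (a : ℤ) - ((t - r : ℕ) : ℤ) = a + r - t by push_cast [hrt.le]; ring,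
            dvd_sub_self_right]
        rw [this, ← Int.modEq_iff_dvd, Int.natCast_modEq_iff, Nat.ModEq,
          Nat.mod_eq_of_lt (by omega : t - r < t)]
        exact eq_comm
      simp only [e1, e2]
      rw [A, B]
      omega
    rw [hchg]

/-- Two cores have the same quotient, with shift the difference of charges. -/
lemma core_sameQ {t : ℕ} (ht : Odd t) {k k' : BarPartition} (hk : IsBarCore t k)
    (hk' : IsBarCore t k') : SameQ t (fun n => chg t k' n - chg t k n) k k' where
  per n := by simp only [chg_per t k n, chg_per t k' n]
  odd n := by simp only [chg_odd]; ring
  bead n := by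
    have t0 : (t : ℤ) ≠ 0 := by obtain ⟨s, hs⟩ := ht; omega
    rw [core_bd ht hk, core_bd ht hk', per_mul (chg_per t k'), Int.add_mul_ediv_left _ _ t0]
    omega

/-- The shift is determined by the cores. -/
lemma shift_eq {t : ℕ} (ht : Odd t) {c : ℤ → ℤ} {l m k k' : BarPartition} (h : SameQ t c l m)
    (hl : IsBarCoreOf t l k) (hm : IsBarCoreOf t m k') (n : ℤ) :
    c n = chg t k' n - chg t k n := by
  obtain ⟨u, hu1, hu2⟩ : ∃ u, Relation.ReflTransGen (BarRemoval t) m u ∧ SameQ t c k u := by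
    have hl1 := hl.1
    clear hm hl
    induction hl1 with
    | refl => exact ⟨m, .refl, h⟩
    | tail _ hs ih =>
      obtain ⟨u, h1, h2⟩ := ih
      obtain ⟨u', h3, h4⟩ := h2.down ht hs
      exact ⟨u', h1.tail h3, h4⟩
  have hu := hu2.core ht hl.2
  have t0 : (t : ℤ) ≠ 0 := by obtain ⟨s, hs⟩ := ht; omega
  have e : chg t u n = chg t k' n := by rw [← rtg_chg hu1, rtg_chg hm.1]
  have key : ∀ z : ℤ, n / t + z + c n < chg t k' n ↔ n / t + z < chg t k n := by
    intro z
    have := hu2.bead (n + t * z)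
    rw [core_bd ht hl.2, core_bd ht hu, per_mul hu2.per, per_mul (chg_per t u),
      per_mul (chg_per t u), per_mul (chg_per t k), Int.add_mul_ediv_left _ _ t0,
      Int.add_mul_ediv_left _ _ t0, e] at this
    exact this
  have k1 := key (chg t k n - n / t)
  have k2 := key (chg t k n - n / t - 1)
  omega

lemma sameQ_mu {t : ℕ} {c : ℤ → ℤ} {l m : BarPartition} (h : SameQ t c l m) :
    mu t l = mu t m := by
  unfold mu
  rw [Finset.sum_boole, Finset.sum_boole]
  congr 2
  ext a
  simp only [Finset.mem_filter]
  refine and_congr_left fun ha => ?_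
  obtain ⟨j, rfl⟩ := ha
  have c0 : c 0 = 0 := by have := h.odd 0; simp at this; omega
  have e : c ((t * j : ℕ) : ℤ) = 0 := by
    have := per_mul h.per 0 j
    rw [c0, zero_add] at this
    push_cast; exact this
  have := h.bead ((t * j : ℕ) : ℤ)
  rw [e, mul_zero, add_zero, bd_natCast, bd_natCast] at this
  exact this.symm

lemma sgn_eq (l : BarPartition) : l.sgn = if sg l % 2 = 0 then 1 else -1 := by
  unfold BarPartition.sgn
  have h1 : l.length ≤ l.size := by
    unfold BarPartition.length BarPartition.size
    rw [Finset.card_eq_sum_ones]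
    refine Finset.sum_le_sum fun a ha => Nat.pos_of_ne_zero fun h => l.zero_not_mem (h ▸ ha)
  have h2 : sg l = l.size + l.length := by
    unfold sg BarPartition.length BarPartition.size
    rw [Finset.sum_add_distrib]; simp
  rcases Nat.even_or_odd (l.size - l.length) with h | h
  · rw [h.neg_one_pow, if_pos]
    obtain ⟨s, hs⟩ := h; omega
  · rw [h.neg_one_pow, if_neg]
    obtain ⟨s, hs⟩ := h; omega

/-- Lifting along removal sequences. -/
lemma exists_lift {t : ℕ} (ht : Odd t) {c : ℤ → ℤ} {l k k' : BarPartition}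
    (h : Relation.ReflTransGen (BarRemoval t) l k) (hk : SameQ t c k k') :
    ∃ m, Relation.ReflTransGen (BarRemoval t) m k' ∧ SameQ t c l m ∧
      m.size + k.size = l.size + k'.size ∧
      (sg l + sg m + sg k + sg k') % 2 = 0 := by
  induction h using Relation.ReflTransGen.head_induction_on with
  | refl => exact ⟨k', .refl, hk, by omega, by omega⟩
  | head hs _ ih =>
    obtain ⟨m, h1, h2, h3, h4⟩ := ih
    obtain ⟨m', h5, h6⟩ := h2.up ht hs
    refine ⟨m', h1.head h5, h6, ?_, ?_⟩
    · have := step_size h5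
      have := step_size hs
      omega
    · have := step_sg ht h5
      have := step_sg ht hs
      have := sameQ_mu h2
      have := sameQ_mu h6
      omega

lemma mem_twisted {t r : ℕ} (hr : 1 ≤ r) (hrt : r < t) (l : BarPartition) (i : ℤ) :
    i ∈ twistedRunner t r l ↔ bd l (r + t * i) := by
  unfold twistedRunner
  simp only [Set.mem_setOf_eq]
  rcases lt_or_ge i 0 with h | h
  · obtain ⟨j, rfl⟩ : ∃ j : ℕ, i = -(j : ℤ) - 1 := ⟨(-(i + 1)).toNat, by omega⟩
    have e : (-(-(j : ℤ) - 1 + 1)).toNat = j := by omega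
    have e' : (r : ℤ) + t * (-(j : ℤ) - 1) = -((t * j + (t - r) : ℕ) : ℤ) := by
      push_cast [hrt.le]; ring
    rw [e, e', bd_neg_natCast _ _ (by omega)]
    constructor
    · rintro (h | h)
      · omega
      · exact h.2
    · intro h'; exact Or.inr ⟨h, h'⟩
  · obtain ⟨j, rfl⟩ : ∃ j : ℕ, i = (j : ℤ) := ⟨i.toNat, by omega⟩
    have e' : (r : ℤ) + t * (j : ℤ) = ((t * j + r : ℕ) : ℤ) := by push_cast; ring
    rw [e', bd_natCast]
    constructor
    · rintro (h | h)
      · simpa using h.2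
      · omega
    · intro h'; exact Or.inl ⟨h, by simpa using h'⟩

lemma SameQ.hasSame {t : ℕ} {c : ℤ → ℤ} {l m : BarPartition} (h : SameQ t c l m) :
    HasSameBarQuotient t l m := by
  constructor
  · intro j
    have c0 : c 0 = 0 := by have := h.odd 0; simp at this; omega
    have e : c ((t * j : ℕ) : ℤ) = 0 := by
      have := per_mul h.per 0 j
      rw [c0, zero_add] at this
      push_cast; exact this
    have := h.bead ((t * j : ℕ) : ℤ)
    rw [e, mul_zero, add_zero, bd_natCast, bd_natCast] at this
    exact this.symm
  · intro r hr hrt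
    refine ⟨c r, ?_⟩
    ext i
    rw [mem_twisted hr (by omega)]
    simp only [Set.mem_image]
    have key : ∀ j : ℤ, bd m (r + t * (j + c r)) ↔ bd l (r + t * j) := by
      intro j
      rw [← h.bead, per_mul h.per]; ring_nf
    constructor
    · intro hi
      refine ⟨i - c r, ?_, by ring⟩
      rw [mem_twisted hr (by omega), ← key]
      simpa using hi
    · rintro ⟨j, hj, rfl⟩
      rw [mem_twisted hr (by omega), ← key] at hj
      exact hj

lemma bd_neg (l : BarPartition) (n : ℤ) (hn : n ≠ 0) : bd l (-n) ↔ ¬ bd l n := by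
  unfold bd
  rw [Int.natAbs_neg]
  rcases lt_or_gt_of_ne hn with h | h
  · have : ¬ 0 < n := by omega
    simp [h, this]
  · have : ¬ n < 0 := by omega
    simp [h, this]

lemma hasSame_sameQ {t : ℕ} (ht : Odd t) {l m : BarPartition} (h : HasSameBarQuotient t l m) :
    ∃ c, SameQ t c l m := by
  have t0 : (0 : ℤ) < t := by obtain ⟨s, hs⟩ := ht; omega
  obtain ⟨h0, h1⟩ := h
  choose! d hd using h1
  let c : ℤ → ℤ := fun n => if n % t = 0 then 0 else
    if 2 * (n % t) < t then d (n % t).toNat else - d (t - n % t).toNat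
  have hper : Function.Periodic c (t : ℤ) := by
    intro n
    simp only [c, Int.add_emod_right]
  have hodd : ∀ n, c (-n) = - c n := by
    intro n
    by_cases hn : n % t = 0
    · have : (-n) % t = 0 := by
        rw [← Int.dvd_iff_emod_eq_zero] at hn ⊢
        exact (dvd_neg).2 hn
      simp only [c, hn, this, if_true, neg_zero]
    · have e : (-n) % t = t - n % t := by
        have h1 := Int.emod_lt_of_pos n t0
        have h2 := Int.emod_nonneg n t0.ne'
        have h3 : -n = (t - n % t) + t * (-(n / t) - 1) := by
          have := Int.emod_add_mul_ediv n t
          linear_combination this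
        rw [h3, Int.add_mul_emod_self_left, Int.emod_eq_of_lt (by omega) (by omega)]
      have h1 := Int.emod_lt_of_pos n t0
      obtain ⟨s, hs⟩ := ht
      simp only [c, e, hn, if_false]
      rw [if_neg (by omega)]
      by_cases h2 : 2 * (n % t) < t
      · rw [if_neg (by omega), if_pos h2]
        congr 3; omega
      · rw [if_pos (by omega), if_neg h2]
        simp
  -- the bead condition on the small residues
  have small : ∀ n : ℤ, n % t ≠ 0 → 2 * (n % t) < t → (bd m (n + t * c n) ↔ bd l n) := by
    intro n hn hs
    have h2 := Int.emod_nonneg n t0.ne'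
    obtain ⟨r, hr⟩ : ∃ r : ℕ, (r : ℤ) = n % t := ⟨(n % t).toNat, by omega⟩
    have hcn : c n = d r := by
      simp only [c]
      rw [if_neg hn, if_pos hs]
      congr 1; omega
    have hn' : n = r + t * (n / t) := by rw [hr]; exact (Int.emod_add_mul_ediv n t).symm
    have := hd r (by omega) (by omega)
    have h3 : (n / t + d r) ∈ twistedRunner t r m ↔ n / t ∈ twistedRunner t r l := by
      rw [this]
      simp
    rw [mem_twisted (by omega) (by omega), mem_twisted (by omega) (by omega), ← hn'] at h3
    rw [hcn, ← h3]
    have : n + t * d r = r + t * (n / t + d r) := by linear_combination hn'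
    rw [this]
  refine ⟨c, hper, hodd, fun n => ?_⟩
  have hlt := Int.emod_lt_of_pos n t0
  by_cases hn : n % t = 0
  · have hc : c n = 0 := by simp only [c, hn, if_true]
    rw [hc, mul_zero, add_zero]
    have hpos : ∀ j : ℕ, bd m (t * j) ↔ bd l (t * j) := by
      intro j
      have := h0 j
      rw [← bd_natCast, ← bd_natCast] at this
      push_cast at this
      exact this.symm
    obtain ⟨z, rfl⟩ := Int.dvd_of_emod_eq_zero hn
    rcases le_or_gt 0 z with hz | hz
    · obtain ⟨j, rfl⟩ : ∃ j : ℕ, z = j := ⟨z.toNat, by omega⟩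
      exact hpos j
    · obtain ⟨j, rfl⟩ : ∃ j : ℕ, z = -(j : ℤ) := ⟨(-z).toNat, by omega⟩
      have hj : (t : ℤ) * j ≠ 0 := mul_ne_zero t0.ne' (by omega)
      rw [mul_neg, bd_neg _ _ hj, bd_neg _ _ hj, hpos]
  · by_cases hs : 2 * (n % t) < t
    · exact small n hn hs
    · have h2 := Int.emod_nonneg n t0.ne'
      have e : (-n) % t = t - n % t := by
        have h3 : -n = (t - n % t) + t * (-(n / t) - 1) := by
          have := Int.emod_add_mul_ediv n t
          linear_combination this
        rw [h3, Int.add_mul_emod_self_left, Int.emod_eq_of_lt (by omega) (by omega)]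
      obtain ⟨s, hts⟩ := ht
      have := small (-n) (by omega) (by omega)
      have n0 : n ≠ 0 := by rintro rfl; simp at hn
      have n1 : n + t * c n ≠ 0 := by
        intro h
        apply hn
        have h4 : n = t * (- c n) := by linear_combination h
        rw [h4]; simp
      rw [hodd, show -n + t * -c n = -(n + t * c n) by ring, bd_neg _ _ n1, bd_neg _ _ n0,
        not_iff_not] at this
      exact this

lemma sameQ_unique {t : ℕ} {c : ℤ → ℤ} {l m m' : BarPartition} (h : SameQ t c l m)
    (h' : SameQ t c l m') : m = m' := by
  apply bd_ext
  intro n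
  have e : n = (n - t * c n) + t * c (n - t * c n) := by
    have := per_mul h.per n (- c n)
    rw [mul_neg, ← sub_eq_add_neg] at this
    rw [this]; ring
  rw [e, h.bead, h'.bead]

end BarAux

/-- Let `p` be an odd prime, `w ≥ 1`, and let `κ`, `κ′` be `p`-bar cores.
For every bar-partition `λ` with `p`-bar core `κ` and `p`-bar weight `w` there is a unique
bar-partition `Ψ(λ)` with `p`-bar core `κ′` and the same `p`-bar quotient as `λ`; the
resulting map `Ψ` is a bijection between the two sets of bar-partitions (with cores `κ`,
resp. `κ′`, and weight `w`), and `sgn(Ψ(λ)) = sgn(κ)·sgn(κ′)·sgn(λ)`. -/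
theorem barCore_replacement_bijection (p : ℕ) (hp : p.Prime) (hpodd : Odd p)
    (w : ℕ) (hw : 1 ≤ w)
    (κ κ' : BarPartition) (hκ : IsBarCore p κ) (hκ' : IsBarCore p κ') :
    ∃ Ψ : {l : BarPartition // IsBarCoreOf p l κ ∧ l.size = κ.size + p * w} →
        {m : BarPartition // IsBarCoreOf p m κ' ∧ m.size = κ'.size + p * w},
      Function.Bijective Ψ ∧
      ∀ l : {l : BarPartition // IsBarCoreOf p l κ ∧ l.size = κ.size + p * w},
        HasSameBarQuotient p l.1 (Ψ l).1 ∧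
        (∀ m : BarPartition, IsBarCoreOf p m κ' → HasSameBarQuotient p l.1 m →
          m = (Ψ l).1) ∧
        (Ψ l).1.sgn = κ.sgn * κ'.sgn * l.1.sgn := by
  classical
  have ex : ∀ l : {l : BarPartition // IsBarCoreOf p l κ ∧ l.size = κ.size + p * w},
      ∃ m : {m : BarPartition // IsBarCoreOf p m κ' ∧ m.size = κ'.size + p * w},
        BarAux.SameQ p (fun n => BarAux.chg p κ' n - BarAux.chg p κ n) l.1 m.1 ∧
        m.1.sgn = κ.sgn * κ'.sgn * l.1.sgn := by
    rintro ⟨l, hl, hsz⟩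
    obtain ⟨m, h1, h2, h3, h4⟩ :=
      BarAux.exists_lift hpodd hl.1 (BarAux.core_sameQ hpodd hκ hκ')
    refine ⟨⟨m, ⟨h1, hκ'⟩, by omega⟩, h2, ?_⟩
    simp only [BarAux.sgn_eq]
    split_ifs <;> first | rfl | omega
  choose Ψ hΨ hsgn using ex
  refine ⟨Ψ, ⟨?_, ?_⟩, fun l => ⟨(hΨ l).hasSame, ?_, hsgn l⟩⟩
  · intro l l' e
    have h1 := (hΨ l).symm
    have h2 := (hΨ l').symm
    rw [← e] at h2
    exact Subtype.ext (BarAux.sameQ_unique h1 h2)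
  · rintro ⟨m, hm, hsz⟩
    obtain ⟨l, h1, h2, h3, h4⟩ :=
      BarAux.exists_lift hpodd hm.1 (BarAux.core_sameQ hpodd hκ' hκ)
    refine ⟨⟨l, ⟨h1, hκ⟩, by omega⟩, Subtype.ext ?_⟩
    have h5 := h2.symm
    simp only [neg_sub] at h5
    exact BarAux.sameQ_unique (hΨ _) h5
  · intro m hm hq
    obtain ⟨c, hc⟩ := BarAux.hasSame_sameQ hpodd hq
    have e : c = fun n => BarAux.chg p κ' n - BarAux.chg p κ n :=
      funext fun n => BarAux.shift_eq hpodd hc l.2.1 hm n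
    rw [e] at hc
    exact BarAux.sameQ_unique hc (hΨ l)
end
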